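/- For all real numbers γ with 0 < γ < 1 and λ > 0 there exists a constant C > 0, depending only on n, p, α, γ, λ, C₁ and C₂, with the following property: let 0 < r₁ < r₂ and h ≥ 0 be real numbers and let v be a nonnegative continuous function on the closed annulus {r₁ ≤ |x| ≤ r₂} which is C¹ on the open annulus B_{r₁,r₂} and a solution of div A(x,Dv) + b(x)|Dv|^α ≥ χ_ω(x)·h in B_{r₁,r₂}, where ω = {x ∈ B_{r₁,r₂} : v(x) > 0} and χ_ω is the characteristic function of ω. Suppose that ρ ↦ M(ρ;v) is nondecreasing on [r₁, r₂], that M(r₂;v) > M(r₁;v) ≥ γ·M(r₂;v), and that (M(r₂;v) − M(r₁;v))^{α−p+1}·(r₂ − r₁)^{p−α}·ess sup_{B_{r₁,r₂}} b ≥ λ. Then (M(r₂;v) − M(r₁;v))^α·ess sup_{B_{r₁,r₂}} b ≥ C·(r₂ − r₁)^α·h. -/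

import Mathlib

open MeasureTheory Metric Set Filter
open scoped RealInnerProductSpace ENNReal

noncomputable section

abbrev Euc (n : ℕ) := EuclideanSpace ℝ (Fin n)

/-- Weak solution of `div A(x,Dv) + b(x)|Dv|^α ≥ a(x)` on an open set `U`:
for every nonnegative test function `φ ∈ C₀^∞(U)`,
`-∫ A(x,Dv)·Dφ + ∫ b |Dv|^α φ ≥ ∫ a φ`. -/
def IsWeakSol {n : ℕ} (A : Euc n → Euc n → Euc n) (b : Euc n → ℝ) (α : ℝ)
    (a : Euc n → ℝ) (U : Set (Euc n)) (v : Euc n → ℝ) : Prop :=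
  ∀ φ : Euc n → ℝ, ContDiff ℝ (⊤ : ℕ∞) φ → HasCompactSupport φ → tsupport φ ⊆ U →
    (∀ x, 0 ≤ φ x) →
    (∫ x in U, a x * φ x) ≤
      (-(∫ x in U, ⟪A x (gradient v x), gradient φ x⟫)) +
        ∫ x in U, b x * ‖gradient v x‖ ^ α * φ x

/-- Structural conditions on `A`: measurability, coercivity and growth. -/
def StructCond {n : ℕ} (A : Euc n → Euc n → Euc n) (p C₁ C₂ : ℝ) : Prop :=
  Measurable (Function.uncurry A) ∧
    ∀ x ζ : Euc n, C₁ * ‖ζ‖ ^ p ≤ ⟪ζ, A x ζ⟫ ∧ ‖A x ζ‖ ≤ C₂ * ‖ζ‖ ^ (p - 1)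

/-- Locally bounded function on `ℝⁿ`. -/
def LocBdd {n : ℕ} (b : Euc n → ℝ) : Prop :=
  ∀ K : Set (Euc n), IsCompact K → ∃ C, ∀ x ∈ K, b x ≤ C

/-- `M(r; u) = max_{|x| = r} u x`. -/
def sphMax {n : ℕ} (u : Euc n → ℝ) (r : ℝ) : ℝ := sSup (u '' Metric.sphere (0 : Euc n) r)

/-- `g_θ(t) = inf_{s ∈ (t/θ, θ t)} g s`. -/
def ginf (g : ℝ → ℝ) (θ t : ℝ) : ℝ := sInf (g '' Set.Ioo (t / θ) (θ * t))

/-- The open annulus `{x : r₁ < |x| < r₂}`. -/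
def Ann (n : ℕ) (r₁ r₂ : ℝ) : Set (Euc n) := {x : Euc n | r₁ < ‖x‖ ∧ ‖x‖ < r₂}

/-- `q_σ(r) = ess inf_{r/σ < |x| < σ r} q x`. -/
def qinf {n : ℕ} (q : Euc n → ℝ) (σ r : ℝ) : ℝ :=
  essInf q (volume.restrict (Ann n (r / σ) (σ * r)))

/-- `f_σ(r) = q_σ(r) / (1 + r q_σ(r)^{(α-p+1)/α} ess sup_{r/σ<|x|<σr} b^{(p-1)/α})`. -/
def fdef {n : ℕ} (q b : Euc n → ℝ) (p α σ r : ℝ) : ℝ :=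
  qinf q σ r /
    (1 + r * qinf q σ r ^ ((α - p + 1) / α) *
      essSup (fun x => b x ^ ((p - 1) / α)) (volume.restrict (Ann n (r / σ) (σ * r))))

/-!
Cut the annulus into `N` shells of equal width. By pigeonhole the spherical maximum grows by at most
`(M(r₂;v) - M(r₁;v)) / N` across one of them; inscribe in that shell a ball about a point where the
maximum is attained and rescale the ball, and the range of `v` on it, to unit size. Then `v` becomes
a function `w ≤ 1` on the unit ball with `w 0 ≥ γ` for a fixed `γ > 0`, satisfying an inequality of
the same type. Taking `N` comparable to the left-hand side of the largeness hypothesis on `b` keeps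
the rescaled coefficient of the gradient term bounded, and it remains to bound the rescaled source
`a` by a constant.

For this put `u = w - 2‖x‖²`, whose nonnegative superlevel sets lie well inside the unit ball, and
test with `exp (s u) (u - k)₊²`: for `s` large the derivative of the exponential absorbs the
gradient term, whatever the exponent `α ≤ p`. The resulting energy estimate bounds
`a * |{u > k'}|` by a multiple of `|{u > k}|`, and together with the Sobolev inequality in `L¹` it
gives the nonlinear decay of `k ↦ |{u > k}|` required by the De Giorgi iteration. A large `a` would
make the first superlevel set so small that the iteration forces `u ≤ γ / 2 + γ / 4` everywhere,
although `u 0 = w 0 ≥ γ`.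
-/

section DeGiorgiIteration

variable {D b θ : ℝ}

lemma rpow_mul_rpow_one_sub {x : ℝ} (hx : 0 < x) (θ : ℝ) : x ^ θ * x ^ (1 - θ) = x := by
  rw [← Real.rpow_add hx, add_sub_cancel, Real.rpow_one]

lemma exists_pos_rpow_one_sub_eq {y : ℝ} (hθ : θ < 1) (hy : 0 < y) :
    ∃ x : ℝ, 0 < x ∧ x ^ (1 - θ) = y :=
  ⟨y ^ (1 - θ)⁻¹, by positivity, Real.rpow_inv_rpow hy.le (sub_pos.2 hθ).ne'⟩

lemma exists_tendsto_zero_of_rpow_succ_le (hD : 0 < D) (hb : 1 < b) (hθ₀ : 0 < θ) (hθ₁ : θ < 1) :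
    ∃ ε > 0, ∀ x : ℕ → ℝ, (∀ j, 0 ≤ x j) → (∀ j, x (j + 1) ^ θ ≤ D * b ^ j * x j) → x 0 ≤ ε →
      Tendsto x atTop (nhds 0) := by
  have hb₀ : 0 < b := one_pos.trans hb
  obtain ⟨μ, hμ₀, hμ⟩ := exists_pos_rpow_one_sub_eq hθ₁ (inv_pos.2 hb₀)
  obtain ⟨ε, hε₀, hε⟩ := exists_pos_rpow_one_sub_eq hθ₁ (by positivity : 0 < μ ^ θ / D)
  have hμ₁ : μ < 1 := by
    by_contra! h
    exact (Real.one_le_rpow h (sub_pos.2 hθ₁).le).not_gt (hμ ▸ inv_lt_one_of_one_lt₀ hb)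
  refine ⟨ε, hε₀, fun x hx₀ hx hxε => ?_⟩
  have hstep (j : ℕ) : D * b ^ j * (ε * μ ^ j) = (ε * μ ^ (j + 1)) ^ θ := by
    have hε' : ε = ε ^ θ * (μ ^ θ / D) := by rw [← hε, rpow_mul_rpow_one_sub hε₀]
    have hμ' : b ^ j * μ ^ j = (μ ^ j) ^ θ := by
      have hsplit := rpow_mul_rpow_one_sub (pow_pos hμ₀ j) θ
      rw [← Real.rpow_pow_comm hμ₀.le (1 - θ) j, hμ] at hsplit
      nth_rw 1 [← hsplit]
      rw [inv_pow]
      field_simp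
    rw [pow_succ, Real.mul_rpow hε₀.le (by positivity), Real.mul_rpow (by positivity) hμ₀.le, ← hμ']
    nth_rw 1 [hε']
    field_simp
  have hgeom (j : ℕ) : x j ≤ ε * μ ^ j := by
    induction j with
    | zero => simpa using hxε
    | succ j ih =>
      refine (Real.rpow_le_rpow_iff (hx₀ _) (by positivity) hθ₀).1 ((hx j).trans ?_)
      rw [← hstep]
      gcongr
  refine squeeze_zero hx₀ hgeom ?_
  simpa using (tendsto_pow_atTop_nhds_zero_of_lt_one hμ₀.le hμ₁).const_mul ε

lemma exists_forall_le_imp_eq_zero_of_rpow_le {k d C β : ℝ} (hd : 0 < d) (hC : 0 < C) (hβ : 0 < β)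
    (hθ₀ : 0 < θ) (hθ₁ : θ < 1) :
    ∃ ε > 0, ∀ m : ℝ → ℝ, (∀ t, 0 ≤ m t) → Antitone m →
      (∀ s t, k ≤ s → s < t → (t - s) ^ β * m t ^ θ ≤ C * m s) → m k ≤ ε → m (k + d) = 0 := by
  have hb : (1 : ℝ) < 2 ^ β := Real.one_lt_rpow one_lt_two hβ
  obtain ⟨ε, hε, hconv⟩ := exists_tendsto_zero_of_rpow_succ_le
    (D := C * (2 / d) ^ β) (by positivity) hb hθ₀ hθ₁
  refine ⟨ε, hε, fun m hm₀ hm hstep hmk => ?_⟩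
  set t : ℕ → ℝ := fun j => k + d * (1 - (2 ^ j)⁻¹) with ht
  have hpow (j : ℕ) : ((2 : ℝ) ^ j)⁻¹ ≤ 1 := inv_le_one_of_one_le₀ (one_le_pow₀ one_le_two)
  have hgap (j : ℕ) : t (j + 1) - t j = (2 / d * 2 ^ j)⁻¹ := by
    simp only [ht, pow_succ]
    field_simp
    ring
  have hlim : Tendsto (fun j => m (t j)) atTop (nhds 0) := by
    refine hconv _ (fun j => hm₀ _) (fun j => ?_) (by simpa [ht] using hmk)
    have hgap₀ : 0 < t (j + 1) - t j := by rw [hgap]; positivity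
    have hk : k ≤ t j := le_add_of_nonneg_right (mul_nonneg hd.le (sub_nonneg.2 (hpow j)))
    have h := hstep _ _ hk (sub_pos.1 hgap₀)
    rw [hgap, Real.inv_rpow (by positivity), inv_mul_le_iff₀ (by positivity),
      Real.mul_rpow (by positivity) (by positivity), ← Real.rpow_pow_comm zero_le_two] at h
    exact h.trans_eq (by ring)
  refine le_antisymm (ge_of_tendsto' hlim fun j => hm ?_) (hm₀ _)
  have := mul_nonneg hd.le (inv_nonneg.2 (pow_nonneg zero_le_two j))
  simp only [ht]
  linarith

end DeGiorgiIteration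

section Sobolev

open Module

variable {E F : Type*} [NormedAddCommGroup E] [NormedSpace ℝ E] [FiniteDimensional ℝ E]
  [MeasurableSpace E] [BorelSpace E] [NormedAddCommGroup F] [NormedSpace ℝ F]
  (μ : Measure E) [μ.IsAddHaarMeasure]

lemma mul_measure_norm_ge_rpow_le {q : NNReal} (hq : NNReal.HolderConjugate (finrank ℝ E) q)
    {u : E → F} (hu : ContDiff ℝ 1 u) (huc : HasCompactSupport u) {c : ℝ} (hc : 0 ≤ c) :
    c * μ.real {x | c ≤ ‖u x‖} ^ (q : ℝ)⁻¹ ≤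
      eLpNormLESNormFDerivOneConst μ (q : ℝ) * ∫ x, ‖fderiv ℝ u x‖ ∂μ := by
  have hq₀ : (0 : ℝ) < q := mod_cast hq.symm.pos
  have hint : Integrable (fderiv ℝ u) μ :=
    (hu.continuous_fderiv one_ne_zero).integrable_of_hasCompactSupport (huc.fderiv (𝕜 := ℝ))
  have hsob := eLpNorm_le_eLpNorm_fderiv_one μ hu huc hq
  rw [eLpNorm_one_eq_lintegral_enorm, ← ofReal_integral_norm_eq_lintegral_enorm hint,
    ← ENNReal.ofReal_coe_nnreal (p := eLpNormLESNormFDerivOneConst μ q),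
    ← ENNReal.ofReal_mul NNReal.zero_le_coe] at hsob
  have hmarkov := (mul_meas_ge_le_pow_eLpNorm' μ (by exact_mod_cast hq.symm.pos.ne')
    ENNReal.coe_ne_top hu.continuous.aestronglyMeasurable (ENNReal.ofReal c)).trans
    (ENNReal.rpow_le_rpow hsob ENNReal.toReal_nonneg)
  have hset : {x | ENNReal.ofReal c ≤ ‖u x‖ₑ} = {x | c ≤ ‖u x‖} := by
    ext x
    simp only [mem_ofPred_eq, ← ofReal_norm, ENNReal.ofReal_le_ofReal_iff (norm_nonneg _)]
  have hreal := ENNReal.toReal_mono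
    (ENNReal.rpow_ne_top_of_nonneg hq₀.le ENNReal.ofReal_ne_top) hmarkov
  rw [hset, ENNReal.coe_toReal, ENNReal.toReal_mul, ← ENNReal.toReal_rpow, ← ENNReal.toReal_rpow,
    ENNReal.toReal_ofReal hc, ENNReal.toReal_ofReal (by positivity), ← measureReal_def] at hreal
  refine (Real.rpow_le_rpow_iff (by positivity) (by positivity) hq₀).1 ?_
  rwa [Real.mul_rpow hc (by positivity), Real.rpow_inv_rpow measureReal_nonneg hq₀.ne']

lemma exists_mul_measure_norm_ge_rpow_le (hE : 2 ≤ finrank ℝ E) :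
    ∃ S > 0, ∀ u : E → F, ContDiff ℝ 1 u → HasCompactSupport u → ∀ c : ℝ, 0 ≤ c →
      c * μ.real {x | c ≤ ‖u x‖} ^ (1 - 1 / (finrank ℝ E : ℝ)) ≤ S * ∫ x, ‖fderiv ℝ u x‖ ∂μ := by
  have hn : (1 : NNReal) < finrank ℝ E := by exact_mod_cast hE
  have hq := NNReal.HolderConjugate.conjExponent hn
  refine ⟨eLpNormLESNormFDerivOneConst μ (NNReal.conjExponent (finrank ℝ E) : ℝ) + 1,
    by positivity, fun u hu huc c hc => ?_⟩
  have hinv : 1 - 1 / (finrank ℝ E : ℝ) = ((NNReal.conjExponent (finrank ℝ E) : NNReal) : ℝ)⁻¹ := by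
    rw [one_div]
    exact_mod_cast hq.coe.one_sub_inv
  rw [hinv]
  refine (mul_measure_norm_ge_rpow_le μ hq hu huc hc).trans ?_
  gcongr
  exact le_add_of_nonneg_right zero_le_one

end Sobolev

section SmoothApproximation

variable {E : Type*} [NormedAddCommGroup E] [NormedSpace ℝ E] [FiniteDimensional ℝ E]

lemma tsupport_normed_convolution_subset [MeasurableSpace E] [BorelSpace E] (μ : Measure E)
    [μ.IsAddHaarMeasure] (β : ContDiffBump (0 : E)) (φ : E → ℝ) :
    tsupport (convolution (β.normed μ) φ (ContinuousLinearMap.lsmul ℝ ℝ) μ) ⊆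
      cthickening β.rOut (tsupport φ) := by
  refine closure_minimal ?_ isClosed_cthickening
  refine (support_convolution_subset (ContinuousLinearMap.lsmul ℝ ℝ)).trans ?_
  rintro _ ⟨y, hy, z, hz, rfl⟩
  rw [β.support_normed_eq, mem_ball_zero_iff] at hy
  refine mem_cthickening_of_dist_le (y + z) z _ _ (subset_closure hz) ?_
  rw [dist_eq_norm, add_sub_cancel_right]
  exact hy.le

lemma exists_contDiff_near_of_contDiff_one {φ : E → ℝ} (hφ : ContDiff ℝ 1 φ)
    (hφc : HasCompactSupport φ) (hφ₀ : ∀ x, 0 ≤ φ x) {d ε : ℝ} (hd : 0 < d) (hε : 0 < ε) :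
    ∃ ψ : E → ℝ, ContDiff ℝ (⊤ : ℕ∞) ψ ∧ tsupport ψ ⊆ cthickening d (tsupport φ) ∧
      (∀ x, 0 ≤ ψ x) ∧ (∀ x, ‖ψ x - φ x‖ ≤ ε) ∧ ∀ x, ‖fderiv ℝ ψ x - fderiv ℝ φ x‖ ≤ ε := by
  borelize E
  let μ : Measure E := .addHaar
  have hφ' : Continuous (fderiv ℝ φ) := hφ.continuous_fderiv one_ne_zero
  obtain ⟨r₁, hr₁, hnear⟩ := Metric.uniformContinuous_iff.1
    (hφc.uniformContinuous_of_continuous hφ.continuous) ε hε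
  obtain ⟨r₂, hr₂, hnear'⟩ := Metric.uniformContinuous_iff.1
    ((hφc.fderiv (𝕜 := ℝ)).uniformContinuous_of_continuous hφ') ε hε
  have hr : 0 < min d (min r₁ r₂) := lt_min hd (lt_min hr₁ hr₂)
  let β : ContDiffBump (0 : E) := ⟨_, _, half_pos hr, half_lt_self hr⟩
  have hβ {x y : E} (hy : y ∈ ball x β.rOut) : dist y x < r₁ ∧ dist y x < r₂ :=
    lt_min_iff.1 ((mem_ball.1 hy).trans_le (min_le_right _ _))
  refine ⟨convolution (β.normed μ) φ (ContinuousLinearMap.lsmul ℝ ℝ) μ,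
    β.hasCompactSupport_normed.contDiff_convolution_left _ β.contDiff_normed
      hφ.continuous.locallyIntegrable,
    (tsupport_normed_convolution_subset μ β φ).trans (cthickening_mono (min_le_left _ _) _),
    fun x => integral_nonneg fun t => mul_nonneg (β.nonneg_normed t) (hφ₀ _), fun x => ?_,
    fun x => ?_⟩
  · rw [← dist_eq_norm]
    exact β.dist_normed_convolution_le hφ.continuous.aestronglyMeasurable
      fun y hy => (hnear (hβ hy).1).le
  · rw [(hφc.hasFDerivAt_convolution_right (ContinuousLinearMap.lsmul ℝ ℝ)
      β.continuous_normed.locallyIntegrable hφ x).fderiv, ← dist_eq_norm]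
    exact β.dist_normed_convolution_le hφ'.aestronglyMeasurable
      fun y hy => (hnear' (hβ hy).2).le

end SmoothApproximation

section DivergenceInequality

variable {E : Type*} [NormedAddCommGroup E] [NormedSpace ℝ E]
  {U V : Set E} {F : E → E} {f g φ ψ : E → ℝ} {x : E}

/-- The integrand obtained by testing `div F + f` against `φ` and integrating by parts. -/
def weakForm (F : E → E) (f φ : E → ℝ) (x : E) : ℝ := f x * φ x - fderiv ℝ φ x (F x)

lemma weakForm_of_notMem_tsupport (hx : x ∉ tsupport φ) : weakForm F f φ x = 0 := by
  simp [weakForm, image_eq_zero_of_notMem_tsupport hx, fderiv_of_notMem_tsupport ℝ hx]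

lemma weakForm_mono_left (hφ : 0 ≤ φ x) (hfg : f x ≤ g x) : weakForm F f φ x ≤ weakForm F g φ x :=
  sub_le_sub_right (mul_le_mul_of_nonneg_right hfg hφ) _

lemma weakForm_le_add_of_norm_sub_le {ε : ℝ} (hφψ : ‖ψ x - φ x‖ ≤ ε)
    (hdφψ : ‖fderiv ℝ ψ x - fderiv ℝ φ x‖ ≤ ε) :
    weakForm F f ψ x ≤ weakForm F f φ x + ε * (‖f x‖ + ‖F x‖) := by
  have hsource : ‖f x * (ψ x - φ x)‖ ≤ ‖f x‖ * ε :=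
    (norm_mul_le _ _).trans (mul_le_mul_of_nonneg_left hφψ (norm_nonneg _))
  have hflux := (fderiv ℝ ψ x - fderiv ℝ φ x).le_of_opNorm_le hdφψ (F x)
  have h₁ := (abs_le.1 hsource).2
  have h₂ := (abs_le.1 hflux).1
  rw [sub_apply] at h₂
  simp only [weakForm]
  linarith

variable [MeasurableSpace E] {μ : Measure E}

/-- The inequality `div F + f ≥ 0` in `U`, in the weak sense with nonnegative compactly supported
`C¹` test functions; the integrability of the tested integrand is part of the notion, so that the
integral is never a junk value. -/
def DivAddNonneg (μ : Measure E) (U : Set E) (F : E → E) (f : E → ℝ) : Prop :=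
  ∀ φ : E → ℝ, ContDiff ℝ 1 φ → HasCompactSupport φ → tsupport φ ⊆ U → (∀ x, 0 ≤ φ x) →
    Integrable (weakForm F f φ) μ ∧ 0 ≤ ∫ x, weakForm F f φ x ∂μ

variable [BorelSpace E]

lemma integrable_weakForm [FiniteDimensional ℝ E] (hF : LocallyIntegrableOn F U μ)
    (hf : LocallyIntegrableOn f U μ) (hφ : ContDiff ℝ 1 φ) (hφc : HasCompactSupport φ)
    (hφU : tsupport φ ⊆ U) : Integrable (weakForm F f φ) μ := by
  have hφ' := hφ.continuous_fderiv one_ne_zero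
  obtain ⟨C, hC⟩ := (hφc.fderiv (𝕜 := ℝ)).exists_bound_of_continuous hφ'
  rw [← integrableOn_iff_integrable_of_support_subset (s := tsupport φ)
    fun x hx => not_imp_comm.1 weakForm_of_notMem_tsupport hx]
  refine ((hf.integrableOn_compact_subset hφU hφc).mul_continuousOn
    hφ.continuous.continuousOn hφc).sub ?_
  exact ContinuousLinearMap.integrable_of_bilin_of_bdd_left (ContinuousLinearMap.id ℝ (E →L[ℝ] ℝ)) C
    hφ'.aestronglyMeasurable (.of_forall hC) (hF.integrableOn_compact_subset hφU hφc)

namespace DivAddNonneg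

lemma of_contDiff_top [FiniteDimensional ℝ E] (hU : IsOpen U)
    (hF : LocallyIntegrableOn F U μ) (hf : LocallyIntegrableOn f U μ)
    (h : ∀ φ : E → ℝ, ContDiff ℝ (⊤ : ℕ∞) φ → HasCompactSupport φ → tsupport φ ⊆ U →
      (∀ x, 0 ≤ φ x) → 0 ≤ ∫ x, weakForm F f φ x ∂μ) : DivAddNonneg μ U F f := by
  intro φ hφ hφc hφU hφ₀
  refine ⟨integrable_weakForm hF hf hφ hφc hφU, ?_⟩
  obtain ⟨d, hd, hdU⟩ := hφc.isCompact.exists_cthickening_subset_open hU hφU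
  set K := cthickening d (tsupport φ)
  have hK : IsCompact K := hφc.isCompact.cthickening
  have hfK : IntegrableOn f K μ := hf.integrableOn_compact_subset hdU hK
  have hFK : IntegrableOn F K μ := hF.integrableOn_compact_subset hdU hK
  have hKint {ψ : E → ℝ} (hψ : tsupport ψ ⊆ K) :
      ∫ x in K, weakForm F f ψ x ∂μ = ∫ x, weakForm F f ψ x ∂μ :=
    setIntegral_eq_integral_of_forall_compl_eq_zero
      fun x hx => weakForm_of_notMem_tsupport fun hxψ => hx (hψ hxψ)
  have happrox (ε : ℝ) (hε : 0 < ε) :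
      0 ≤ (∫ x, weakForm F f φ x ∂μ) + ε * ∫ x in K, ‖f x‖ + ‖F x‖ ∂μ := by
    obtain ⟨ψ, hψ, hψK, hψ₀, hψφ, hdψφ⟩ :=
      exists_contDiff_near_of_contDiff_one hφ hφc hφ₀ hd hε
    have hψc : HasCompactSupport ψ := hK.of_isClosed_subset isClosed_closure hψK
    have hψ₁ : ContDiff ℝ 1 ψ := hψ.of_le (by exact_mod_cast le_top)
    have hiψ := (integrable_weakForm hF hf hψ₁ hψc (hψK.trans hdU)).integrableOn (s := K)
    have hiφ := (integrable_weakForm hF hf hφ hφc hφU).integrableOn (s := K)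
    have herr : Integrable (fun x => ε * (‖f x‖ + ‖F x‖)) (μ.restrict K) :=
      (hfK.norm.add hFK.norm).const_mul ε
    calc 0 ≤ ∫ x, weakForm F f ψ x ∂μ := h ψ hψ hψc (hψK.trans hdU) hψ₀
      _ = ∫ x in K, weakForm F f ψ x ∂μ := (hKint hψK).symm
      _ ≤ ∫ x in K, weakForm F f φ x + ε * (‖f x‖ + ‖F x‖) ∂μ :=
        integral_mono hiψ (hiφ.add herr)
          fun x => weakForm_le_add_of_norm_sub_le (hψφ x) (hdψφ x)
      _ = _ := by
        rw [integral_add hiφ herr, integral_const_mul, hKint (self_subset_cthickening _)]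
  have hlim : Tendsto (fun ε => (∫ x, weakForm F f φ x ∂μ) + ε * ∫ x in K, ‖f x‖ + ‖F x‖ ∂μ)
      (nhdsWithin 0 (Ioi 0)) (nhds (∫ x, weakForm F f φ x ∂μ)) :=
    tendsto_nhdsWithin_of_tendsto_nhds (Continuous.tendsto' (by fun_prop) _ _ (by simp))
  exact ge_of_tendsto hlim (eventually_mem_nhdsWithin.mono happrox)

lemma mono_right [FiniteDimensional ℝ E] (h : DivAddNonneg μ U F f)
    (hF : LocallyIntegrableOn F U μ) (hg : LocallyIntegrableOn g U μ)
    (hfg : ∀ᵐ x ∂μ, x ∈ U → f x ≤ g x) : DivAddNonneg μ U F g := by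
  intro φ hφ hφc hφU hφ₀
  obtain ⟨hint, hpos⟩ := h φ hφ hφc hφU hφ₀
  have hint' := integrable_weakForm hF hg hφ hφc hφU
  refine ⟨hint', hpos.trans (integral_mono_ae hint hint' (hfg.mono fun x hx => ?_))⟩
  by_cases hxφ : x ∈ tsupport φ
  · exact weakForm_mono_left (hφ₀ x) (hx (hφU hxφ))
  · rw [weakForm_of_notMem_tsupport hxφ, weakForm_of_notMem_tsupport hxφ]

lemma comp_add_smul [FiniteDimensional ℝ E] [μ.IsAddHaarMeasure] (h : DivAddNonneg μ U F f)
    {x₀ : E} {r c : ℝ} (hr : 0 < r) (hc : 0 ≤ c) (hV : MapsTo (fun y => x₀ + r • y) V U) :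
    DivAddNonneg μ V (fun y => c • F (x₀ + r • y)) (fun y => c * r * f (x₀ + r • y)) := by
  intro φ hφ hφc hφV hφ₀
  let e : E ≃ₜ E := (Homeomorph.addLeft (-x₀)).trans (Homeomorph.smulOfNeZero r⁻¹ (by positivity))
  have he (x : E) : e x = r⁻¹ • (-x₀ + x) := rfl
  have hsupp : tsupport (φ ∘ e) ⊆ U := by
    rw [tsupport_comp_eq_preimage]
    intro x hx
    simpa [he, smul_inv_smul₀ hr.ne'] using hV (hφV hx)
  obtain ⟨hint, hpos⟩ := h (φ ∘ e) (hφ.comp (by simp only [funext he]; fun_prop))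
    (hφc.comp_homeomorph e) hsupp fun _ => hφ₀ _
  have hfderiv (y : E) : fderiv ℝ (φ ∘ e) (x₀ + r • y) = r⁻¹ • fderiv ℝ φ y := by
    have := fderiv_comp_add_left (𝕜 := ℝ) (f := fun z => φ (r⁻¹ • z)) (x := x₀ + r • y) (-x₀)
    rw [fderiv_comp_smul, neg_add_cancel_left, inv_smul_smul₀ hr.ne'] at this
    exact this
  have hpull (y : E) : weakForm (fun y => c • F (x₀ + r • y)) (fun y => c * r * f (x₀ + r • y)) φ y
      = c * r * weakForm F f (φ ∘ e) (x₀ + r • y) := by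
    have hey : (φ ∘ e) (x₀ + r • y) = φ y := by simp [he, inv_smul_smul₀ hr.ne']
    simp only [weakForm, hfderiv, hey, map_smul, smul_eq_mul, smul_apply]
    field_simp
  rw [funext hpull]
  have hint' := hint.comp_add_left x₀
  refine ⟨(hint'.comp_smul hr.ne').const_mul _, ?_⟩
  rw [integral_const_mul, Measure.integral_comp_smul μ (fun z => weakForm F f (φ ∘ e) (x₀ + z)) r,
    integral_add_left_eq_self (weakForm F f (φ ∘ e)) x₀]
  exact mul_nonneg (by positivity) (smul_nonneg (abs_nonneg _) hpos)

end DivAddNonneg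

end DivergenceInequality

section TruncatedExponential

variable {s k k' t : ℝ}

/-- The profile `t ↦ exp (s t) (t - k)₊²`. The square makes it `C¹` across `k`, and the exponential
makes its derivative dominate `s` times the profile. -/
def expTrunc (s k t : ℝ) : ℝ := Real.exp (s * t) * max (t - k) 0 ^ 2

lemma hasDerivAt_max_zero_sq (t : ℝ) : HasDerivAt (fun t : ℝ => max t 0 ^ 2) (2 * max t 0) t := by
  rw [hasDerivAt_iff_isLittleO_nhds_zero]
  refine Asymptotics.IsBigO.trans_isLittleO (.of_bound 1 (.of_forall fun h => ?_))
    (Asymptotics.isLittleO_pow_id (𝕜 := ℝ) one_lt_two)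
  rw [Real.norm_eq_abs, norm_pow, Real.norm_eq_abs, sq_abs, one_mul, smul_eq_mul, abs_le]
  rcases max_cases (t + h) 0 with ⟨h₁, _⟩ | ⟨h₁, _⟩ <;>
    rcases max_cases t 0 with ⟨h₂, _⟩ | ⟨h₂, _⟩ <;>
      rw [h₁, h₂] <;> constructor <;> nlinarith

lemma hasDerivAt_expTrunc (s k t : ℝ) :
    HasDerivAt (expTrunc s k)
      (Real.exp (s * t) * (s * max (t - k) 0 ^ 2 + 2 * max (t - k) 0)) t := by
  have hexp : HasDerivAt (fun t : ℝ => Real.exp (s * t)) (Real.exp (s * t) * s) t := by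
    simpa using ((hasDerivAt_id t).const_mul s).exp
  exact (hexp.mul ((hasDerivAt_max_zero_sq (t - k)).comp_sub_const t k)).congr_deriv (by ring)

lemma deriv_expTrunc (s k : ℝ) : deriv (expTrunc s k) =
    fun t => Real.exp (s * t) * (s * max (t - k) 0 ^ 2 + 2 * max (t - k) 0) :=
  funext fun t => (hasDerivAt_expTrunc s k t).deriv

lemma contDiff_expTrunc (s k : ℝ) : ContDiff ℝ 1 (expTrunc s k) := by
  refine contDiff_one_iff_deriv.2 ⟨fun t => (hasDerivAt_expTrunc s k t).differentiableAt, ?_⟩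
  rw [deriv_expTrunc]
  fun_prop

lemma expTrunc_of_le (h : t ≤ k) : expTrunc s k t = 0 := by
  simp [expTrunc, max_eq_right (sub_nonpos.2 h)]

lemma deriv_expTrunc_of_le (h : t ≤ k) : deriv (expTrunc s k) t = 0 := by
  simp [deriv_expTrunc, max_eq_right (sub_nonpos.2 h)]

lemma expTrunc_nonneg : 0 ≤ expTrunc s k t := by unfold expTrunc; positivity

lemma mul_expTrunc_le_deriv : s * expTrunc s k t ≤ deriv (expTrunc s k) t := by
  have hpos : 0 ≤ Real.exp (s * t) * max (t - k) 0 := by positivity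
  simp only [deriv_expTrunc, expTrunc]
  linarith

lemma deriv_expTrunc_nonneg (hs : 0 ≤ s) : 0 ≤ deriv (expTrunc s k) t :=
  (mul_nonneg hs expTrunc_nonneg).trans mul_expTrunc_le_deriv

lemma deriv_expTrunc_le (hs : 0 ≤ s) (hk : 0 ≤ k) (ht : t ≤ 1) :
    deriv (expTrunc s k) t ≤ Real.exp s * (s + 2) := by
  have hmax : max (t - k) 0 ≤ 1 := max_le (by linarith) zero_le_one
  have hexp : s * t ≤ s := mul_le_of_le_one_right hs ht
  simp only [deriv_expTrunc]
  calc _ ≤ Real.exp s * (s * 1 ^ 2 + 2 * 1) := by gcongr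
    _ = _ := by ring

lemma sq_sub_le_expTrunc (hs : 0 ≤ s) (hk : 0 ≤ k) (hkk' : k ≤ k') (ht : k' ≤ t) :
    (k' - k) ^ 2 ≤ expTrunc s k t := by
  have hexp : 1 ≤ Real.exp (s * t) :=
    Real.one_le_exp (mul_nonneg hs (hk.trans (hkk'.trans ht)))
  have hsq : (k' - k) ^ 2 ≤ max (t - k) 0 ^ 2 :=
    pow_le_pow_left₀ (sub_nonneg.2 hkk') (le_max_of_le_left (by linarith)) 2
  exact hsq.trans (le_mul_of_one_le_left (sq_nonneg _) hexp)

end TruncatedExponential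

section TruncatedTestFunction

variable {E : Type*} {U K : Set E} {u : E → ℝ} {s k : ℝ} {x : E}

/-- The truncation of `u` at level `k` by the profile `expTrunc s k`, extended by zero outside
`U`. -/
def truncOn (U : Set E) (s k : ℝ) (u : E → ℝ) : E → ℝ :=
  U.indicator fun x => expTrunc s k (u x)

lemma truncOn_of_mem (hx : x ∈ U) : truncOn U s k u x = expTrunc s k (u x) :=
  indicator_of_mem hx _

lemma truncOn_nonneg (U : Set E) (s k : ℝ) (u : E → ℝ) (x : E) : 0 ≤ truncOn U s k u x :=
  indicator_nonneg (fun _ _ => expTrunc_nonneg) x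

lemma truncOn_of_notMem_superlevel (hx : x ∉ U ∩ u ⁻¹' Ioi k) : truncOn U s k u x = 0 := by
  by_cases hxU : x ∈ U
  · rw [truncOn_of_mem hxU, expTrunc_of_le (not_lt.1 fun h => hx ⟨hxU, h⟩)]
  · exact indicator_of_notMem hxU _

lemma tsupport_truncOn_subset [TopologicalSpace E] (hK : IsClosed K) (hsub : U ∩ u ⁻¹' Ioi k ⊆ K) :
    tsupport (truncOn U s k u) ⊆ K :=
  closure_minimal
    (fun _ hx => hsub (not_imp_comm.1 truncOn_of_notMem_superlevel hx)) hK

lemma truncOn_eventuallyEq [TopologicalSpace E] (hU : IsOpen U) (hx : x ∈ U) :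
    truncOn U s k u =ᶠ[nhds x] expTrunc s k ∘ u :=
  (hU.eventually_mem hx).mono fun _ => truncOn_of_mem

variable [NormedAddCommGroup E] [NormedSpace ℝ E]

lemma contDiff_truncOn (hU : IsOpen U) (hu : ContDiffOn ℝ 1 u U) (hK : IsClosed K) (hKU : K ⊆ U)
    (hsub : U ∩ u ⁻¹' Ioi k ⊆ K) : ContDiff ℝ 1 (truncOn U s k u) := by
  refine contDiff_iff_contDiffAt.2 fun x => ?_
  by_cases hx : x ∉ tsupport (truncOn U s k u)
  · exact contDiffAt_const.congr_of_eventuallyEq (notMem_tsupport_iff_eventuallyEq.1 hx)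
  have hxU : x ∈ U := hKU (tsupport_truncOn_subset hK hsub (not_not.1 hx))
  exact ((contDiff_expTrunc s k).contDiffAt.comp x
    (hu.contDiffAt (hU.mem_nhds hxU))).congr_of_eventuallyEq (truncOn_eventuallyEq hU hxU)

lemma fderiv_truncOn_of_mem (hU : IsOpen U) (hu : ContDiffOn ℝ 1 u U) (hx : x ∈ U) :
    fderiv ℝ (truncOn U s k u) x = deriv (expTrunc s k) (u x) • fderiv ℝ u x := by
  have hux := ((hu.contDiffAt (hU.mem_nhds hx)).differentiableAt one_ne_zero).hasFDerivAt
  have hΨ := ((contDiff_expTrunc s k).differentiable one_ne_zero (u x)).hasDerivAt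
  exact ((hΨ.comp_hasFDerivAt x hux).congr_of_eventuallyEq (truncOn_eventuallyEq hU hx)).fderiv

lemma fderiv_truncOn_of_notMem_superlevel (hU : IsOpen U) (hu : ContDiffOn ℝ 1 u U)
    (hK : IsClosed K) (hKU : K ⊆ U) (hsub : U ∩ u ⁻¹' Ioi k ⊆ K) (hx : x ∉ U ∩ u ⁻¹' Ioi k) :
    fderiv ℝ (truncOn U s k u) x = 0 := by
  by_cases hxU : x ∈ U
  · rw [fderiv_truncOn_of_mem hU hu hxU, deriv_expTrunc_of_le (not_lt.1 fun h => hx ⟨hxU, h⟩),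
      zero_smul]
  · exact fderiv_of_notMem_tsupport ℝ fun h => hxU (hKU (tsupport_truncOn_subset hK hsub h))

end TruncatedTestFunction

section Young

variable {p q C₁ C₂ X : ℝ}

lemma rpow_sub_one_le_add_div {M : ℝ} (hp : 1 ≤ p) (hM : 0 < M) (hX : 0 ≤ X) :
    X ^ (p - 1) ≤ M ^ (p - 1) + X ^ p / M := by
  rcases le_total X M with h | h
  · have := Real.rpow_le_rpow hX h (sub_nonneg.2 hp)
    have : 0 ≤ X ^ p / M := by positivity
    linarith
  · have hX₀ : 0 < X := hM.trans_le h
    have hle : X ^ (p - 1) ≤ X ^ p / M := by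
      rw [Real.rpow_sub_one hX₀.ne']
      gcongr
    have : 0 ≤ M ^ (p - 1) := by positivity
    linarith

lemma rpow_le_one_add_rpow (hq : 0 ≤ q) (hqp : q ≤ p) (hX : 0 ≤ X) : X ^ q ≤ 1 + X ^ p := by
  rcases le_total X 1 with h | h
  · exact (Real.rpow_le_one hX h hq).trans (le_add_of_nonneg_right (by positivity))
  · exact (Real.rpow_le_rpow_of_exponent_le h hqp).trans (le_add_of_nonneg_left zero_le_one)

/-- The constant left over when Young's inequality absorbs the flux through the paraboloid into the
coercivity. -/
def youngConst (p C₁ C₂ : ℝ) : ℝ := 4 * C₂ * (8 * C₂ / C₁) ^ (p - 1) + 3 * C₁ / 2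

/- `X` is the size of the gradient, `Φ` and `Φ'` are the values of the profile and its derivative,
and `D - e` is the flux paired with the gradient of `w - 2‖x‖²`. -/
lemma energy_density_le {L Φ Φ' f D e a : ℝ} (hp : 1 < p) (hC₁ : 0 < C₁) (hC₂ : 0 < C₂)
    (hX : 0 ≤ X) (hΦ : 0 ≤ Φ) (hΦ' : 0 ≤ Φ') (hL : 4 * L / C₁ * Φ ≤ Φ')
    (hf : f ≤ L * (1 + X ^ p) - a) (hD : C₁ * X ^ p ≤ D) (he : e ≤ 4 * C₂ * X ^ (p - 1)) :
    f * Φ - Φ' * (D - e) ≤ youngConst p C₁ C₂ * Φ' - a * Φ - C₁ / 4 * (Φ' * (X + 4)) := by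
  have hflux : 4 * C₂ * X ^ (p - 1) ≤ 4 * C₂ * (8 * C₂ / C₁) ^ (p - 1) + C₁ / 2 * X ^ p := by
    calc _ ≤ 4 * C₂ * ((8 * C₂ / C₁) ^ (p - 1) + X ^ p / (8 * C₂ / C₁)) := by
          gcongr
          exact rpow_sub_one_le_add_div hp.le (by positivity) hX
      _ = _ := by field_simp; ring
  have hX₁ : X ≤ 1 + X ^ p := by simpa using rpow_le_one_add_rpow zero_le_one hp.le hX
  have hLΦ : L * Φ ≤ C₁ / 4 * Φ' := by
    calc L * Φ = C₁ / 4 * (4 * L / C₁ * Φ) := by field_simp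
      _ ≤ _ := by gcongr
  have hsource : f * Φ ≤ C₁ / 4 * Φ' * (1 + X ^ p) - a * Φ := by
    calc f * Φ ≤ (L * (1 + X ^ p) - a) * Φ := by gcongr
      _ = L * Φ * (1 + X ^ p) - a * Φ := by ring
      _ ≤ _ := by gcongr
  have hpairing : C₁ / 2 * X ^ p - 4 * C₂ * (8 * C₂ / C₁) ^ (p - 1) ≤ D - e := by linarith
  have hprod := mul_le_mul_of_nonneg_left hpairing hΦ'
  have hgrad : C₁ / 4 * (Φ' * X) ≤ C₁ / 4 * (Φ' * (1 + X ^ p)) := by gcongr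
  simp only [youngConst]
  linarith

end Young

section Subsolutions

open Module

variable {E : Type*} [NormedAddCommGroup E] {U : Set E} {v w f : E → ℝ} {F : E → E} {x : E}
  {p α C₁ C₂ B B' L γ a h s k k' : ℝ}

/-- The function `w` lowered by a paraboloid. If `w ≤ 1` on the unit ball, its nonnegative
superlevel sets stay in the ball of radius `3/4`. -/
def subParaboloid (w : E → ℝ) (x : E) : ℝ := w x - 2 * ‖x‖ ^ 2

/-- The superlevel sets, in the unit ball, on which the De Giorgi iteration is run. -/
def superlevel (w : E → ℝ) (k : ℝ) : Set E := ball 0 1 ∩ subParaboloid w ⁻¹' Ioi k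

/-- The test function `exp (s u) (u - k)₊²` with `u = w - 2‖x‖²`, supported in the unit ball. -/
def levelTest (w : E → ℝ) (s k : ℝ) : E → ℝ := truncOn (ball 0 1) s k (subParaboloid w)

lemma subParaboloid_le (w : E → ℝ) (x : E) : subParaboloid w x ≤ w x :=
  sub_le_self _ (by positivity)

lemma pos_of_mem_superlevel (hk : 0 ≤ k) (hx : x ∈ superlevel w k) : 0 < w x :=
  (hk.trans_lt hx.2).trans_le (subParaboloid_le w x)

lemma superlevel_anti (w : E → ℝ) : Antitone (superlevel w) :=
  fun _ _ hkk' => inter_subset_inter_right _ (preimage_mono (Ioi_subset_Ioi hkk'))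

lemma superlevel_subset_closedBall (hw₁ : ∀ x ∈ ball (0 : E) 1, w x ≤ 1) (hk : 0 ≤ k) :
    superlevel w k ⊆ closedBall 0 (3 / 4) := by
  rintro x ⟨hx, hxk⟩
  have := hw₁ x hx
  simp only [subParaboloid, mem_preimage, mem_Ioi] at hxk
  rw [mem_closedBall_zero_iff]
  nlinarith [norm_nonneg x]

lemma levelTest_nonneg (w : E → ℝ) (s k : ℝ) (x : E) : 0 ≤ levelTest w s k x :=
  truncOn_nonneg _ _ _ _ x

lemma levelTest_of_notMem_superlevel (hx : x ∉ superlevel w k) : levelTest w s k x = 0 :=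
  truncOn_of_notMem_superlevel hx

lemma sq_sub_le_levelTest (hs : 0 ≤ s) (hk : 0 ≤ k) (hkk' : k ≤ k') (hx : x ∈ superlevel w k') :
    (k' - k) ^ 2 ≤ levelTest w s k x :=
  (sq_sub_le_expTrunc hs hk hkk' (le_of_lt hx.2)).trans_eq (truncOn_of_mem hx.1).symm

lemma tsupport_levelTest_subset (hw₁ : ∀ x ∈ ball (0 : E) 1, w x ≤ 1) (hk : 0 ≤ k) :
    tsupport (levelTest w s k) ⊆ closedBall 0 (3 / 4) :=
  tsupport_truncOn_subset isClosed_closedBall (superlevel_subset_closedBall hw₁ hk)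

variable [InnerProductSpace ℝ E]

lemma fderiv_comp_add_smul_sub_div {x₀ y : E} {r : ℝ} (κ δ : ℝ)
    (hv : DifferentiableAt ℝ v (x₀ + r • y)) :
    fderiv ℝ (fun y => (v (x₀ + r • y) - κ) / δ) y = (r / δ) • fderiv ℝ v (x₀ + r • y) := by
  have haff : HasFDerivAt (fun y : E => x₀ + r • y) (r • ContinuousLinearMap.id ℝ E) y :=
    ((hasFDerivAt_id y).const_smul r).const_add x₀
  refine ((((hv.hasFDerivAt.comp y haff).sub_const κ).mul_const δ⁻¹).congr_fderiv ?_).fderiv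
  ext z
  simp [div_eq_inv_mul, mul_assoc]

lemma contDiffOn_subParaboloid (hw : ContDiffOn ℝ 1 w U) : ContDiffOn ℝ 1 (subParaboloid w) U :=
  hw.sub (contDiff_const.mul (contDiff_norm_sq ℝ)).contDiffOn

lemma isOpen_superlevel (hw : ContDiffOn ℝ 1 w (ball 0 1)) (k : ℝ) : IsOpen (superlevel w k) :=
  (contDiffOn_subParaboloid hw).continuousOn.isOpen_inter_preimage isOpen_ball isOpen_Ioi

lemma fderiv_subParaboloid (hw : DifferentiableAt ℝ w x) :
    fderiv ℝ (subParaboloid w) x = fderiv ℝ w x - (4 : ℝ) • innerSL ℝ x := by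
  have hsq : HasFDerivAt (fun y : E => ‖y‖ ^ 2) (2 • innerSL ℝ x) x :=
    (hasStrictFDerivAt_norm_sq x).hasFDerivAt
  refine ((hw.hasFDerivAt.sub (hsq.const_mul 2)).congr_fderiv ?_).fderiv
  ext y
  simp only [sub_apply, smul_apply, smul_eq_mul, nsmul_eq_mul]
  ring

lemma norm_fderiv_subParaboloid_le (hw : DifferentiableAt ℝ w x) (hx : x ∈ ball (0 : E) 1) :
    ‖fderiv ℝ (subParaboloid w) x‖ ≤ ‖fderiv ℝ w x‖ + 4 := by
  rw [mem_ball_zero_iff] at hx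
  calc ‖fderiv ℝ (subParaboloid w) x‖ = ‖fderiv ℝ w x - (4 : ℝ) • innerSL ℝ x‖ := by
        rw [fderiv_subParaboloid hw]
    _ ≤ ‖fderiv ℝ w x‖ + ‖(4 : ℝ) • innerSL ℝ x‖ := norm_sub_le _ _
    _ = ‖fderiv ℝ w x‖ + 4 * ‖x‖ := by rw [norm_smul, innerSL_apply_norm]; norm_num
    _ ≤ ‖fderiv ℝ w x‖ + 4 := by linarith

section LevelTest

variable (hw : ContDiffOn ℝ 1 w (ball 0 1)) (hw₁ : ∀ x ∈ ball (0 : E) 1, w x ≤ 1) (hk : 0 ≤ k)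

include hw

lemma fderiv_levelTest_of_mem (hx : x ∈ ball (0 : E) 1) : fderiv ℝ (levelTest w s k) x =
    deriv (expTrunc s k) (subParaboloid w x) • fderiv ℝ (subParaboloid w) x :=
  fderiv_truncOn_of_mem isOpen_ball (contDiffOn_subParaboloid hw) hx

lemma norm_fderiv_levelTest_le (hs : 0 ≤ s) (hx : x ∈ ball (0 : E) 1) :
    ‖fderiv ℝ (levelTest w s k) x‖ ≤
      deriv (expTrunc s k) (subParaboloid w x) * (‖fderiv ℝ w x‖ + 4) := by
  have hΦ' : 0 ≤ deriv (expTrunc s k) (subParaboloid w x) := deriv_expTrunc_nonneg hs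
  rw [fderiv_levelTest_of_mem hw hx, norm_smul, Real.norm_of_nonneg hΦ']
  gcongr
  exact norm_fderiv_subParaboloid_le
    ((hw.contDiffAt (isOpen_ball.mem_nhds hx)).differentiableAt one_ne_zero) hx

include hw₁ hk

lemma contDiff_levelTest : ContDiff ℝ 1 (levelTest w s k) :=
  contDiff_truncOn isOpen_ball (contDiffOn_subParaboloid hw) isClosed_closedBall
    (closedBall_subset_ball (by norm_num)) (superlevel_subset_closedBall hw₁ hk)

lemma fderiv_levelTest_of_notMem_superlevel (hx : x ∉ superlevel w k) :
    fderiv ℝ (levelTest w s k) x = 0 :=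
  fderiv_truncOn_of_notMem_superlevel isOpen_ball (contDiffOn_subParaboloid hw)
    isClosed_closedBall (closedBall_subset_ball (by norm_num))
    (superlevel_subset_closedBall hw₁ hk) hx

end LevelTest

variable [FiniteDimensional ℝ E]

lemma hasCompactSupport_levelTest (hw₁ : ∀ x ∈ ball (0 : E) 1, w x ≤ 1) (hk : 0 ≤ k) :
    HasCompactSupport (levelTest w s k) :=
  (isCompact_closedBall 0 (3 / 4)).of_isClosed_subset isClosed_closure
    (tsupport_levelTest_subset hw₁ hk)

lemma integrable_levelTest [MeasurableSpace E] [BorelSpace E] (hw : ContDiffOn ℝ 1 w (ball 0 1))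
    (hw₁ : ∀ x ∈ ball (0 : E) 1, w x ≤ 1) (hk : 0 ≤ k) : Integrable (levelTest w s k) :=
  (contDiff_levelTest hw hw₁ hk).continuous.integrable_of_hasCompactSupport
    (hasCompactSupport_levelTest hw₁ hk)

variable [MeasurableSpace E] [BorelSpace E]

lemma measureReal_superlevel_le (hw : ContDiffOn ℝ 1 w (ball 0 1))
    (hw₁ : ∀ x ∈ ball (0 : E) 1, w x ≤ 1) (hs : 0 ≤ s) (hk : 0 ≤ k) (hkk' : k < k') :
    volume.real (superlevel w k') ≤ volume.real {x | (k' - k) ^ 2 ≤ ‖levelTest w s k x‖} := by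
  have hpos : 0 < (k' - k) ^ 2 := pow_pos (sub_pos.2 hkk') 2
  refine measureReal_mono (fun x hx => ?_)
    ((integrable_levelTest hw hw₁ hk).norm.measure_ge_lt_top hpos).ne
  exact (sq_sub_le_levelTest hs hk hkk'.le hx).trans (le_abs_self _)

lemma measure_superlevel_ne_top (w : E → ℝ) (k : ℝ) : volume (superlevel w k) ≠ ⊤ :=
  measure_ne_top_of_subset inter_subset_left measure_ball_lt_top.ne

/-- The energy carried by a superlevel set, per unit volume. -/
def energyConst (p C₁ C₂ L : ℝ) : ℝ :=
  youngConst p C₁ C₂ * (Real.exp (4 * L / C₁) * (4 * L / C₁ + 2))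

lemma energyConst_pos (hC₁ : 0 < C₁) (hC₂ : 0 < C₂) (hL : 0 ≤ L) : 0 < energyConst p C₁ C₂ L := by
  unfold energyConst youngConst
  positivity

/-- A `C¹` function `v` for which `div F + f ≥ 0` weakly in `U`, where the flux `F` is coercive and
of growth `p - 1` along `Dv` and the source obeys `f ≤ B |Dv|^α - h` wherever `v > 0`. The fields
`F` and `f` play the roles of `A(x, Dv)` and `b |Dv|^α - χ h`; unlike the equation itself, this
class is stable under affine rescaling of both variables. -/
structure IsSubsolOn (p α C₁ C₂ B h : ℝ) (U : Set E) (v f : E → ℝ) (F : E → E) : Prop where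
  contDiffOn : ContDiffOn ℝ 1 v U
  coercive : ∀ x ∈ U, C₁ * ‖fderiv ℝ v x‖ ^ p ≤ fderiv ℝ v x (F x)
  growth : ∀ x ∈ U, ‖F x‖ ≤ C₂ * ‖fderiv ℝ v x‖ ^ (p - 1)
  source_le : ∀ x ∈ U, 0 < v x → f x ≤ B * ‖fderiv ℝ v x‖ ^ α - h
  divAddNonneg : DivAddNonneg volume U F f

namespace IsSubsolOn

section Energy

variable (hsub : IsSubsolOn p α C₁ C₂ L a (ball 0 1) w f F)
  (hw₁ : ∀ x ∈ ball (0 : E) 1, w x ≤ 1) (hp : 1 < p) (hC₁ : 0 < C₁) (hC₂ : 0 < C₂)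
  (hα₀ : 0 ≤ α) (hαp : α ≤ p) (hL : 0 ≤ L) (hk : 0 ≤ k)

include hsub hw₁ hp hC₁ hC₂ hα₀ hαp hL hk

lemma weakForm_levelTest_le (hx : x ∈ superlevel w k) :
    weakForm F f (levelTest w (4 * L / C₁) k) x ≤
      energyConst p C₁ C₂ L -
        a * levelTest w (4 * L / C₁) k x -
        C₁ / 4 * ‖fderiv ℝ (levelTest w (4 * L / C₁) k) x‖ := by
  set s := 4 * L / C₁ with hs
  set u := subParaboloid w
  set Φ' := deriv (expTrunc s k) (u x)
  have hs₀ : 0 ≤ s := by positivity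
  have hΦ' : 0 ≤ Φ' := deriv_expTrunc_nonneg hs₀
  have hxb : x ∈ ball (0 : E) 1 := hx.1
  have hdiff : DifferentiableAt ℝ w x :=
    (hsub.contDiffOn.contDiffAt (isOpen_ball.mem_nhds hxb)).differentiableAt one_ne_zero
  have hsource : f x ≤ L * (1 + ‖fderiv ℝ w x‖ ^ p) - a :=
    (hsub.source_le x hxb (pos_of_mem_superlevel hk hx)).trans <| by
      gcongr
      exact rpow_le_one_add_rpow hα₀ hαp (norm_nonneg _)
  have hflux : 4 * ⟪x, F x⟫ ≤ 4 * C₂ * ‖fderiv ℝ w x‖ ^ (p - 1) := by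
    calc 4 * ⟪x, F x⟫ ≤ 4 * (1 * (C₂ * ‖fderiv ℝ w x‖ ^ (p - 1))) := by
          gcongr
          exact (real_inner_le_norm _ _).trans <| mul_le_mul
            (mem_ball_zero_iff.1 hxb).le (hsub.growth x hxb) (norm_nonneg _) zero_le_one
      _ = _ := by ring
  have hdensity := energy_density_le hp hC₁ hC₂ (norm_nonneg _) expTrunc_nonneg hΦ'
    (mul_expTrunc_le_deriv (s := s) (k := k) (t := u x)) hsource (hsub.coercive x hxb) hflux
  have hgrad : ‖fderiv ℝ (levelTest w s k) x‖ ≤ Φ' * (‖fderiv ℝ w x‖ + 4) :=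
    norm_fderiv_levelTest_le hsub.contDiffOn hs₀ hxb
  have hform : weakForm F f (levelTest w s k) x =
      f x * expTrunc s k (u x) - Φ' * (fderiv ℝ w x (F x) - 4 * ⟪x, F x⟫) := by
    rw [weakForm, levelTest, truncOn_of_mem hxb, ← levelTest,
      fderiv_levelTest_of_mem hsub.contDiffOn hxb, fderiv_subParaboloid hdiff]
    rfl
  have hbound : youngConst p C₁ C₂ * Φ' ≤ energyConst p C₁ C₂ L := by
    have : 0 ≤ youngConst p C₁ C₂ := by unfold youngConst; positivity
    rw [energyConst, ← hs]
    gcongr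
    exact deriv_expTrunc_le hs₀ hk ((subParaboloid_le w x).trans (hw₁ x hxb))
  have hgrad' := mul_le_mul_of_nonneg_left hgrad (by positivity : 0 ≤ C₁ / 4)
  rw [hform, levelTest, truncOn_of_mem hxb, ← levelTest]
  linarith

lemma integral_levelTest_add_le :
    a * (∫ x, levelTest w (4 * L / C₁) k x) +
        C₁ / 4 * ∫ x, ‖fderiv ℝ (levelTest w (4 * L / C₁) k) x‖ ≤
      energyConst p C₁ C₂ L *
        volume.real (superlevel w k) := by
  set φ := levelTest w (4 * L / C₁) k with hφ_def
  set K := energyConst p C₁ C₂ L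
  have hφ : ContDiff ℝ 1 φ := contDiff_levelTest hsub.contDiffOn hw₁ hk
  have hφc : HasCompactSupport φ := hasCompactSupport_levelTest hw₁ hk
  have hφU : tsupport φ ⊆ ball 0 1 :=
    (tsupport_levelTest_subset hw₁ hk).trans (closedBall_subset_ball (by norm_num))
  have hφi : Integrable φ := hφ.continuous.integrable_of_hasCompactSupport hφc
  have hDi : Integrable fun x => ‖fderiv ℝ φ x‖ :=
    ((hφ.continuous_fderiv one_ne_zero).integrable_of_hasCompactSupport (hφc.fderiv ℝ)).norm
  have hmeas : MeasurableSet (superlevel w k) := (isOpen_superlevel hsub.contDiffOn k).measurableSet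
  have hKi : Integrable ((superlevel w k).indicator fun _ => K) :=
    (integrable_indicator_iff hmeas).2 (integrableOn_const (measure_superlevel_ne_top w k))
  obtain ⟨hint, hpos⟩ := hsub.divAddNonneg φ hφ hφc hφU (levelTest_nonneg w _ k)
  have hpointwise (x : E) : weakForm F f φ x ≤
      (superlevel w k).indicator (fun _ => K) x - (a * φ x + C₁ / 4 * ‖fderiv ℝ φ x‖) := by
    by_cases hx : x ∈ superlevel w k
    · rw [indicator_of_mem hx, ← sub_sub]
      exact hsub.weakForm_levelTest_le hw₁ hp hC₁ hC₂ hα₀ hαp hL hk hx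
    · rw [indicator_of_notMem hx, weakForm, hφ_def, levelTest_of_notMem_superlevel hx,
        fderiv_levelTest_of_notMem_superlevel hsub.contDiffOn hw₁ hk hx]
      simp
  have hsumi : Integrable fun x => a * φ x + C₁ / 4 * ‖fderiv ℝ φ x‖ :=
    (hφi.const_mul a).add (hDi.const_mul (C₁ / 4))
  have hle := hpos.trans (integral_mono hint (hKi.sub hsumi) hpointwise)
  have hK : ∫ x, (superlevel w k).indicator (fun _ => K) x = K * volume.real (superlevel w k) := by
    rw [integral_indicator_const K hmeas, smul_eq_mul, mul_comm]
  rw [integral_sub' hKi hsumi, hK,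
    integral_add (hφi.const_mul a) (hDi.const_mul (C₁ / 4)), integral_const_mul,
    integral_const_mul] at hle
  linarith

lemma mul_sq_mul_measureReal_superlevel_le (ha : 0 ≤ a) (hkk' : k < k') :
    a * ((k' - k) ^ 2 * volume.real (superlevel w k')) ≤
      energyConst p C₁ C₂ L * volume.real (superlevel w k) := by
  set φ := levelTest w (4 * L / C₁) k
  have hmarkov : (k' - k) ^ 2 * volume.real (superlevel w k') ≤ ∫ x, φ x := by
    calc _ ≤ (k' - k) ^ 2 * volume.real {x | (k' - k) ^ 2 ≤ ‖φ x‖} :=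
          mul_le_mul_of_nonneg_left
            (measureReal_superlevel_le hsub.contDiffOn hw₁ (by positivity) hk hkk') (sq_nonneg _)
      _ = (k' - k) ^ 2 * volume.real {x | (k' - k) ^ 2 ≤ φ x} := by
          simp only [Real.norm_of_nonneg (levelTest_nonneg w _ k _), φ]
      _ ≤ ∫ x, φ x := mul_meas_ge_le_integral_of_nonneg (.of_forall (levelTest_nonneg w _ k))
          (integrable_levelTest hsub.contDiffOn hw₁ hk) _
  have hgrad : 0 ≤ C₁ / 4 * ∫ x, ‖fderiv ℝ φ x‖ := by positivity
  have henergy := hsub.integral_levelTest_add_le hw₁ hp hC₁ hC₂ hα₀ hαp hL hk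
  linarith [mul_le_mul_of_nonneg_left hmarkov ha]

lemma integral_norm_fderiv_levelTest_le (ha : 0 ≤ a) :
    ∫ x, ‖fderiv ℝ (levelTest w (4 * L / C₁) k) x‖ ≤
      4 / C₁ * energyConst p C₁ C₂ L * volume.real (superlevel w k) := by
  have henergy := hsub.integral_levelTest_add_le hw₁ hp hC₁ hC₂ hα₀ hαp hL hk
  have hsource : 0 ≤ a * ∫ x, levelTest w (4 * L / C₁) k x :=
    mul_nonneg ha (integral_nonneg (levelTest_nonneg w _ k))
  calc _ = 4 / C₁ * (C₁ / 4 * ∫ x, ‖fderiv ℝ (levelTest w (4 * L / C₁) k) x‖) := by field_simp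
    _ ≤ 4 / C₁ * (energyConst p C₁ C₂ L * volume.real (superlevel w k)) := by
        gcongr ?_ * ?_
        linarith
    _ = _ := by ring

end Energy

lemma exists_sq_mul_measureReal_superlevel_rpow_le (hE : 2 ≤ finrank ℝ E) (hp : 1 < p)
    (hC₁ : 0 < C₁) (hC₂ : 0 < C₂) (hα₀ : 0 ≤ α) (hαp : α ≤ p) (hL : 0 ≤ L) :
    ∃ D > 0, ∀ a, 0 ≤ a → ∀ (w f : E → ℝ) (F : E → E),
      IsSubsolOn p α C₁ C₂ L a (ball 0 1) w f F → (∀ x ∈ ball (0 : E) 1, w x ≤ 1) →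
      ∀ k k', 0 ≤ k → k < k' →
        (k' - k) ^ 2 * volume.real (superlevel w k') ^ (1 - 1 / (finrank ℝ E : ℝ)) ≤
          D * volume.real (superlevel w k) := by
  obtain ⟨S, hS, hsobolev⟩ := exists_mul_measure_norm_ge_rpow_le (F := ℝ) (volume : Measure E) hE
  have hK : 0 < energyConst p C₁ C₂ L := energyConst_pos hC₁ hC₂ hL
  have hθ : 0 ≤ 1 - 1 / (finrank ℝ E : ℝ) := Nat.one_sub_one_div_cast_nonneg _
  refine ⟨S * (4 / C₁ * energyConst p C₁ C₂ L), by positivity,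
    fun a ha w f F hsub hw₁ k k' hk hkk' => ?_⟩
  set φ := levelTest w (4 * L / C₁) k
  calc _ ≤ (k' - k) ^ 2 * volume.real {x | (k' - k) ^ 2 ≤ ‖φ x‖} ^
          (1 - 1 / (finrank ℝ E : ℝ)) := by
        gcongr ?_ * ?_ ^ _
        exact measureReal_superlevel_le hsub.contDiffOn hw₁ (by positivity) hk hkk'
    _ ≤ S * ∫ x, ‖fderiv ℝ φ x‖ := hsobolev φ (contDiff_levelTest hsub.contDiffOn hw₁ hk)
        (hasCompactSupport_levelTest hw₁ hk) _ (sq_nonneg _)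
    _ ≤ S * (4 / C₁ * energyConst p C₁ C₂ L * volume.real (superlevel w k)) := by
        gcongr
        exact hsub.integral_norm_fderiv_levelTest_le hw₁ hp hC₁ hC₂ hα₀ hαp hL hk ha
    _ = _ := by ring

lemma measureReal_superlevel_pos (hw : ContDiffOn ℝ 1 w (ball 0 1)) (hk : k < w 0) :
    0 < volume.real (superlevel w k) := by
  refine ENNReal.toReal_pos ((isOpen_superlevel hw k).measure_pos volume ⟨0, ?_⟩).ne'
    (measure_superlevel_ne_top w k)
  simpa [superlevel, subParaboloid] using hk

theorem exists_source_bound (hE : 2 ≤ finrank ℝ E) (hp : 1 < p) (hC₁ : 0 < C₁) (hC₂ : 0 < C₂)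
    (hα₀ : 0 ≤ α) (hαp : α ≤ p) (hL : 0 ≤ L) (hγ : 0 < γ) :
    ∃ C > 0, ∀ (a : ℝ) (w f : E → ℝ) (F : E → E), IsSubsolOn p α C₁ C₂ L a (ball 0 1) w f F →
      (∀ x ∈ ball (0 : E) 1, w x ≤ 1) → γ ≤ w 0 → a ≤ C := by
  obtain ⟨D, hD, hdecay⟩ :=
    exists_sq_mul_measureReal_superlevel_rpow_le (E := E) hE hp hC₁ hC₂ hα₀ hαp hL
  have hn : (2 : ℝ) ≤ finrank ℝ E := mod_cast hE
  have hθ₀ : 0 < 1 - 1 / (finrank ℝ E : ℝ) :=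
    sub_pos.2 ((div_lt_one (by linarith)).2 (by linarith))
  have hθ₁ : 1 - 1 / (finrank ℝ E : ℝ) < 1 := sub_lt_self _ (by positivity)
  obtain ⟨ε, hε, hiter⟩ := exists_forall_le_imp_eq_zero_of_rpow_le (k := γ / 2) (d := γ / 4)
    (by positivity) hD two_pos hθ₀ hθ₁
  set K := energyConst p C₁ C₂ L
  have hK : 0 < K := energyConst_pos hC₁ hC₂ hL
  set V := volume.real (ball (0 : E) 1)
  have hV : 0 < V := ENNReal.toReal_pos (measure_ball_pos _ _ one_pos).ne' measure_ball_lt_top.ne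
  refine ⟨K * V / ((γ / 2) ^ 2 * ε), by positivity, fun a w f F hsub hw₁ hw₀ => ?_⟩
  by_contra! hlarge
  have ha : 0 < a := lt_trans (by positivity) hlarge
  set m : ℝ → ℝ := fun k => volume.real (superlevel w k)
  have hm : Antitone m := fun _ _ hkk' =>
    measureReal_mono (superlevel_anti w hkk') (measure_superlevel_ne_top w _)
  have hsmall : m (γ / 2) ≤ ε := by
    have hmarkov := hsub.mul_sq_mul_measureReal_superlevel_le hw₁ hp hC₁ hC₂ hα₀ hαp hL le_rfl
      ha.le (half_pos hγ)
    have hm₀ : m 0 ≤ V := measureReal_mono inter_subset_left measure_ball_lt_top.ne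
    rw [div_lt_iff₀ (by positivity)] at hlarge
    refine le_of_mul_le_mul_left ?_ (by positivity : 0 < a * (γ / 2) ^ 2)
    rw [sub_zero] at hmarkov
    nlinarith [mul_le_mul_of_nonneg_left hm₀ hK.le]
  have hzero : m (γ / 2 + γ / 4) = 0 :=
    hiter m (fun _ => measureReal_nonneg) hm (fun s t hs hst => by
      rw [Real.rpow_two]
      exact hdecay a ha.le w f F hsub hw₁ s t (by linarith) hst) hsmall
  exact (measureReal_superlevel_pos hsub.contDiffOn (by linarith)).ne' hzero

lemma rescale {V : Set E} {x₀ : E} {r κ δ : ℝ} (hsub : IsSubsolOn p α C₁ C₂ B h U v f F)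
    (hU : IsOpen U) (hV : MapsTo (fun y => x₀ + r • y) V U) (hr : 0 < r) (hκ : 0 ≤ κ)
    (hδ : 0 < δ) :
    IsSubsolOn p α C₁ C₂ (B * (r / δ) ^ (p - 1 - α) * r) ((r / δ) ^ (p - 1) * r * h) V
      (fun y => (v (x₀ + r • y) - κ) / δ) (fun y => (r / δ) ^ (p - 1) * r * f (x₀ + r • y))
      (fun y => (r / δ) ^ (p - 1) • F (x₀ + r • y)) := by
  have hrδ : 0 < r / δ := div_pos hr hδ
  have hfderiv {y : E} (hy : y ∈ V) : fderiv ℝ (fun y => (v (x₀ + r • y) - κ) / δ) y =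
      (r / δ) • fderiv ℝ v (x₀ + r • y) :=
    fderiv_comp_add_smul_sub_div κ δ
      ((hsub.contDiffOn.contDiffAt (hU.mem_nhds (hV hy))).differentiableAt one_ne_zero)
  have hnorm {y : E} (hy : y ∈ V) (q : ℝ) :
      ‖fderiv ℝ (fun y => (v (x₀ + r • y) - κ) / δ) y‖ ^ q =
        (r / δ) ^ q * ‖fderiv ℝ v (x₀ + r • y)‖ ^ q := by
    rw [hfderiv hy, norm_smul, Real.norm_of_nonneg hrδ.le, Real.mul_rpow hrδ.le (norm_nonneg _)]
  constructor
  · exact ((hsub.contDiffOn.comp (by fun_prop) hV).sub contDiffOn_const).div_const δ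
  · intro y hy
    have hpow : (r / δ) ^ p = (r / δ) ^ (p - 1) * (r / δ) := by
      rw [← Real.rpow_add_one hrδ.ne', sub_add_cancel]
    rw [hnorm hy, hfderiv hy, hpow, smul_apply, map_smul, smul_eq_mul, smul_eq_mul]
    have := mul_le_mul_of_nonneg_left (hsub.coercive _ (hV hy))
      (by positivity : 0 ≤ (r / δ) ^ (p - 1) * (r / δ))
    linarith
  · intro y hy
    rw [hnorm hy, norm_smul, Real.norm_of_nonneg (by positivity), mul_left_comm]
    exact mul_le_mul_of_nonneg_left (hsub.growth _ (hV hy)) (by positivity)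
  · intro y hy hpos
    have hvpos : 0 < v (x₀ + r • y) :=
      hκ.trans_lt (sub_pos.1 ((div_pos_iff_of_pos_right hδ).1 hpos))
    have hpow : (r / δ) ^ (p - 1) = (r / δ) ^ (p - 1 - α) * (r / δ) ^ α := by
      rw [← Real.rpow_add hrδ, sub_add_cancel]
    rw [hnorm hy]
    have := mul_le_mul_of_nonneg_left (hsub.source_le _ (hV hy) hvpos)
      (by positivity : 0 ≤ (r / δ) ^ (p - 1) * r)
    rw [mul_sub, hpow] at this
    rw [hpow]
    linarith
  · exact hsub.divAddNonneg.comp_add_smul hr (by positivity) hV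

lemma mono_left (hsub : IsSubsolOn p α C₁ C₂ B h U v f F) (hB : B ≤ B') :
    IsSubsolOn p α C₁ C₂ B' h U v f F :=
  { hsub with
    source_le := fun x hx hvx => (hsub.source_le x hx hvx).trans (by gcongr) }

theorem exists_local_source_bound (hE : 2 ≤ finrank ℝ E) (hp : 1 < p) (hC₁ : 0 < C₁)
    (hC₂ : 0 < C₂) (hα₀ : 0 ≤ α) (hαp : α ≤ p) (hL : 0 ≤ L) (hγ : 0 < γ) :
    ∃ C > 0, ∀ (B h κ δ r : ℝ) (x₀ : E) (U : Set E) (v f : E → ℝ) (F : E → E),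
      IsSubsolOn p α C₁ C₂ B h U v f F → IsOpen U → ball x₀ r ⊆ U → 0 < r → 0 ≤ κ → 0 < δ →
      (∀ x ∈ ball x₀ r, v x ≤ κ + δ) → κ + γ * δ ≤ v x₀ → B * (r / δ) ^ (p - 1 - α) * r ≤ L →
      (r / δ) ^ (p - 1) * r * h ≤ C := by
  obtain ⟨C, hC, hbound⟩ := exists_source_bound (E := E) hE hp hC₁ hC₂ hα₀ hαp hL hγ
  refine ⟨C, hC, fun B h κ δ r x₀ U v f F hsub hU hball hr hκ hδ hup hlow hB => ?_⟩
  have hmaps : MapsTo (fun y => x₀ + r • y) (ball 0 1) (ball x₀ r) := fun y hy => by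
    rw [mem_ball_iff_norm, add_sub_cancel_left, norm_smul, Real.norm_of_nonneg hr.le]
    exact mul_lt_of_lt_one_right hr (mem_ball_zero_iff.1 hy)
  refine hbound _ _ _ _ ((hsub.rescale hU (hmaps.mono_right hball) hr hκ hδ).mono_left hB) ?_ ?_
  · intro y hy
    rw [div_le_one hδ]
    linarith [hup _ (hmaps hy)]
  · rw [smul_zero, add_zero, le_div_iff₀ hδ]
    linarith

end IsSubsolOn

end Subsolutions

section SphericalMaximum

variable {n : ℕ} {v : Euc n → ℝ} {r₁ r₂ ρ : ℝ}

lemma exists_sub_succ_le_div (f : ℕ → ℝ) {N : ℕ} (hN : 0 < N) :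
    ∃ i < N, f (i + 1) - f i ≤ (f N - f 0) / N := by
  have hsum : ∑ i ∈ Finset.range N, (f (i + 1) - f i) ≤
      ∑ _i ∈ Finset.range N, (f N - f 0) / N := by
    rw [Finset.sum_range_sub, Finset.sum_const, Finset.card_range, nsmul_eq_mul,
      mul_div_cancel₀ _ (by positivity)]
  obtain ⟨i, hi, hle⟩ := Finset.exists_le_of_sum_le (Finset.nonempty_range_iff.2 hN.ne') hsum
  exact ⟨i, Finset.mem_range.1 hi, hle⟩

lemma le_sphMax (hv : ContinuousOn v (sphere 0 ρ)) {x : Euc n} (hx : x ∈ sphere 0 ρ) :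
    v x ≤ sphMax v ρ :=
  le_csSup ((isCompact_sphere _ _).image_of_continuousOn hv).bddAbove (mem_image_of_mem v hx)

lemma exists_mem_sphere_eq_sphMax (hn : 0 < n) (hρ : 0 ≤ ρ) (hv : ContinuousOn v (sphere 0 ρ)) :
    ∃ x ∈ sphere (0 : Euc n) ρ, v x = sphMax v ρ := by
  have : Nonempty (Fin n) := ⟨⟨0, hn⟩⟩
  exact ((isCompact_sphere _ _).image_of_continuousOn hv).sSup_mem
    ((NormedSpace.sphere_nonempty.2 hρ).image v)

lemma exists_ball_subset_ann_le_add_div (hn : 0 < n) (hr₁ : 0 ≤ r₁) (hr : r₁ < r₂)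
    (hv : ContinuousOn v {x | r₁ ≤ ‖x‖ ∧ ‖x‖ ≤ r₂}) (hmono : MonotoneOn (sphMax v) (Icc r₁ r₂))
    {N : ℕ} (hN : 0 < N) :
    ∃ x₀ m, ball x₀ ((r₂ - r₁) / (2 * N)) ⊆ Ann n r₁ r₂ ∧ sphMax v r₁ ≤ m ∧ m ≤ v x₀ ∧
      ∀ x ∈ ball x₀ ((r₂ - r₁) / (2 * N)), v x ≤ m + (sphMax v r₂ - sphMax v r₁) / N := by
  set r := (r₂ - r₁) / (2 * N) with hr_def
  have hN' : (0 : ℝ) < N := mod_cast hN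
  have hr₀ : 0 < r := div_pos (sub_pos.2 hr) (mul_pos two_pos hN')
  have hv' {ρ : ℝ} (hρ : ρ ∈ Icc r₁ r₂) : ContinuousOn v (sphere 0 ρ) :=
    hv.mono fun x hx => show ‖x‖ ∈ Icc r₁ r₂ from (mem_sphere_zero_iff_norm.1 hx).symm ▸ hρ
  let ρ : ℕ → ℝ := fun i => r₁ + 2 * r * i
  have hρ_succ (i : ℕ) : ρ (i + 1) = ρ i + 2 * r := by simp only [ρ]; push_cast; ring
  have hρN : ρ N = r₂ := by simp only [ρ, hr_def]; field_simp; ring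
  have hρ₀ : ρ 0 = r₁ := by simp [ρ]
  have hρ_mono : Monotone ρ := monotone_nat_of_le_succ fun i => by linarith [hρ_succ i]
  obtain ⟨i, hiN, hi⟩ := exists_sub_succ_le_div (fun i => sphMax v (ρ i)) hN
  have hlo : r₁ ≤ ρ i := hρ₀ ▸ hρ_mono i.zero_le
  have hhi : ρ (i + 1) ≤ r₂ := hρN ▸ hρ_mono hiN
  have hsucc := hρ_succ i
  have hmid : ρ i + r ∈ Icc r₁ r₂ := ⟨by linarith, by linarith⟩
  obtain ⟨x₀, hx₀, hvx₀⟩ :=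
    exists_mem_sphere_eq_sphMax hn (hr₁.trans hmid.1) (hv' hmid)
  have hball {x : Euc n} (hx : x ∈ ball x₀ r) : ρ i < ‖x‖ ∧ ‖x‖ < ρ (i + 1) := by
    have := abs_le.1 (abs_norm_sub_norm_le x x₀)
    rw [mem_ball_iff_norm] at hx
    rw [mem_sphere_zero_iff_norm] at hx₀
    constructor <;> linarith
  refine ⟨x₀, sphMax v (ρ i), fun x hx => ?_, ?_, ?_, fun x hx => ?_⟩
  · exact ⟨hlo.trans_lt (hball hx).1, (hball hx).2.trans_le hhi⟩
  · exact hmono (left_mem_Icc.2 hr.le) ⟨hlo, by linarith⟩ hlo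
  · exact hvx₀ ▸ hmono ⟨hlo, by linarith⟩ hmid (by linarith)
  · obtain ⟨hx₁, hx₂⟩ := hball hx
    have hxI : ‖x‖ ∈ Icc r₁ r₂ := ⟨by linarith, by linarith⟩
    have hle := le_sphMax (hv' hxI) (mem_sphere_zero_iff_norm.2 rfl)
    have := hmono hxI ⟨by linarith, hhi⟩ hx₂.le
    simp only [hρN, hρ₀] at hi
    linarith

lemma isOpen_ann (n : ℕ) (r₁ r₂ : ℝ) : IsOpen (Ann n r₁ r₂) :=
  (isOpen_lt continuous_const continuous_norm).inter (isOpen_lt continuous_norm continuous_const)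

lemma LocBdd.ae_restrict_ann_le_essSup {b : Euc n → ℝ} (hb : LocBdd b) (r₁ r₂ : ℝ) :
    ∀ᵐ x ∂volume.restrict (Ann n r₁ r₂), b x ≤ essSup b (volume.restrict (Ann n r₁ r₂)) := by
  obtain ⟨C, hC⟩ := hb _ (isCompact_closedBall 0 r₂)
  refine ae_le_essSup ⟨C, eventually_map.2 ?_⟩
  exact (ae_restrict_mem (isOpen_ann n r₁ r₂).measurableSet).mono fun x hx =>
    hC x (mem_closedBall_zero_iff.2 hx.2.le)

end SphericalMaximum

section WeakSolutions

variable {n : ℕ} {A : Euc n → Euc n → Euc n} {b a v : Euc n → ℝ} {U : Set (Euc n)}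
  {p α C₁ C₂ B h r₁ r₂ : ℝ}

lemma norm_gradient (v : Euc n → ℝ) (x : Euc n) : ‖gradient v x‖ = ‖fderiv ℝ v x‖ :=
  LinearIsometryEquiv.norm_map _ _

lemma LocBdd.locallyIntegrable (hb : LocBdd b) (hbm : Measurable b) (hb₀ : ∀ x, 0 ≤ b x) :
    LocallyIntegrable b := by
  refine locallyIntegrable_iff.2 fun K hK => ?_
  obtain ⟨C, hC⟩ := hb K hK
  exact Measure.integrableOn_of_bounded hK.measure_lt_top.ne hbm.aestronglyMeasurable (M := C)
    ((ae_restrict_mem hK.measurableSet).mono fun x hx => by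
      rw [Real.norm_of_nonneg (hb₀ x)]
      exact hC x hx)

lemma continuousOn_norm_fderiv_rpow (hU : IsOpen U) (hv : ContDiffOn ℝ 1 v U) {q : ℝ}
    (hq : 0 ≤ q) : ContinuousOn (fun x => ‖fderiv ℝ v x‖ ^ q) U :=
  (hv.continuousOn_fderiv_of_isOpen hU le_rfl).norm.rpow_const fun _ _ => .inr hq

lemma StructCond.locallyIntegrableOn (hA : StructCond A p C₁ C₂) (hp : 1 ≤ p) (hU : IsOpen U)
    (hv : ContDiffOn ℝ 1 v U) : LocallyIntegrableOn (fun x => A x (gradient v x)) U := by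
  have hmeas : Measurable (gradient v) :=
    (InnerProductSpace.toDual ℝ (Euc n)).symm.continuous.measurable.comp (measurable_fderiv ℝ v)
  have hbound : ContinuousOn (fun x => C₂ * ‖gradient v x‖ ^ (p - 1)) U := by
    simp only [norm_gradient]
    exact continuousOn_const.mul (continuousOn_norm_fderiv_rpow hU hv (sub_nonneg.2 hp))
  refine (hbound.locallyIntegrableOn hU.measurableSet).mono
    (hA.1.comp (measurable_id.prodMk hmeas)).aestronglyMeasurable (.of_forall fun x => ?_)
  exact (hA.2 x _).2.trans (le_abs_self _)

lemma IsWeakSol.divAddNonneg (hv : IsWeakSol A b α a U v) (hU : IsOpen U)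
    (hA : LocallyIntegrableOn (fun x => A x (gradient v x)) U)
    (hb : LocallyIntegrableOn (fun x => b x * ‖gradient v x‖ ^ α) U)
    (ha : LocallyIntegrableOn a U) :
    DivAddNonneg volume U (fun x => A x (gradient v x))
      (fun x => b x * ‖gradient v x‖ ^ α - a x) := by
  refine .of_contDiff_top hU hA (hb.sub ha) fun φ hφ hφc hφU hφ₀ => ?_
  have hφ₁ : ContDiff ℝ 1 φ := hφ.of_le (by exact_mod_cast le_top)
  have hzero {G : Type} [NormedAddCommGroup G] : LocallyIntegrableOn (fun _ : Euc n => (0 : G)) U :=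
    locallyIntegrableOn_const 0
  have hiA : Integrable fun x => ⟪A x (gradient v x), gradient φ x⟫ :=
    (integrable_weakForm hA hzero hφ₁ hφc hφU).neg.congr <| .of_forall fun x => by
      simp [weakForm, inner_gradient_right]
  have hib : Integrable fun x => b x * ‖gradient v x‖ ^ α * φ x :=
    (integrable_weakForm hzero hb hφ₁ hφc hφU).congr <| .of_forall fun x => by simp [weakForm]
  have hia : Integrable fun x => a x * φ x :=
    (integrable_weakForm hzero ha hφ₁ hφc hφU).congr <| .of_forall fun x => by simp [weakForm]
  have hiba : Integrable fun x => b x * ‖gradient v x‖ ^ α * φ x - a x * φ x := hib.sub hia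
  have hform (x : Euc n) : weakForm (fun x => A x (gradient v x))
      (fun x => b x * ‖gradient v x‖ ^ α - a x) φ x =
        b x * ‖gradient v x‖ ^ α * φ x - a x * φ x - ⟪A x (gradient v x), gradient φ x⟫ := by
    simp only [weakForm, inner_gradient_right, conj_trivial]
    ring
  rw [← setIntegral_eq_integral_of_forall_compl_eq_zero
    fun x hx => weakForm_of_notMem_tsupport fun hxφ => hx (hφU hxφ)]
  simp only [hform]
  rw [integral_sub hiba.integrableOn hiA.integrableOn,
    integral_sub hib.integrableOn hia.integrableOn]
  linarith [hv φ hφ hφc hφU hφ₀]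

lemma IsWeakSol.isSubsolOn
    (hv : IsWeakSol A b α (indicator {x ∈ U | 0 < v x} fun _ => h) U v)
    (hA : StructCond A p C₁ C₂) (hp : 1 ≤ p) (hα : 0 ≤ α) (hU : IsOpen U)
    (hbm : Measurable b) (hb₀ : ∀ x, 0 ≤ b x) (hb : LocBdd b)
    (hbB : ∀ᵐ x ∂volume.restrict U, b x ≤ B) (hvU : ContDiffOn ℝ 1 v U) :
    IsSubsolOn p α C₁ C₂ B h U v
      (fun x => B * ‖fderiv ℝ v x‖ ^ α - indicator {x ∈ U | 0 < v x} (fun _ => h) x)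
      (fun x => A x (gradient v x)) where
  contDiffOn := hvU
  coercive x _ := by
    rw [← norm_gradient, ← inner_gradient_left]
    exact (hA.2 x _).1
  growth x _ := norm_gradient v x ▸ (hA.2 x _).2
  source_le x hx hvx := by rw [indicator_of_mem (show x ∈ {x ∈ U | 0 < v x} from ⟨hx, hvx⟩)]
  divAddNonneg := by
    have hpow := continuousOn_norm_fderiv_rpow hU hvU hα
    have hpos : IsOpen {x ∈ U | 0 < v x} := hvU.continuousOn.isOpen_inter_preimage hU isOpen_Ioi
    have hχ : LocallyIntegrableOn (indicator {x ∈ U | 0 < v x} fun _ => h) U :=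
      (locallyIntegrableOn_const h).mono
        (measurable_const.indicator hpos.measurableSet).aestronglyMeasurable
        (.of_forall fun x => norm_indicator_le_norm_self _ x)
    have hAi := hA.locallyIntegrableOn hp hU hvU
    have hbi : LocallyIntegrableOn (fun x => b x * ‖gradient v x‖ ^ α) U := by
      simp only [norm_gradient]
      exact ((hb.locallyIntegrable hbm hb₀).locallyIntegrableOn U).mul_continuousOn hpow
        hU.isLocallyClosed
    have hBi := (continuousOn_const (c := B)).mul hpow |>.locallyIntegrableOn hU.measurableSet
      (μ := volume)
    refine (hv.divAddNonneg hU hAi hbi hχ).mono_right hAi (hBi.sub hχ) ?_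
    refine (ae_imp_of_ae_restrict hbB).mono fun x hx hxU => ?_
    rw [norm_gradient]
    gcongr
    exact hx hxU

end WeakSolutions

section AnnulusBound

variable {n : ℕ} {p α C₁ C₂ B C K L γ δ h lam r R N : ℝ}

theorem IsSubsolOn.exists_annulus_source_bound (hn : 2 ≤ n) (hp : 1 < p) (hC₁ : 0 < C₁)
    (hC₂ : 0 < C₂) (hα₀ : 0 ≤ α) (hαp : α ≤ p) (hL : 0 ≤ L) (hγ₀ : 0 < γ) (hγ₁ : γ < 1) :
    ∃ C > 0, ∀ (B h r₁ r₂ : ℝ) (v f : Euc n → ℝ) (F : Euc n → Euc n),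
      IsSubsolOn p α C₁ C₂ B h (Ann n r₁ r₂) v f F → 0 ≤ r₁ → r₁ < r₂ →
      ContinuousOn v {x | r₁ ≤ ‖x‖ ∧ ‖x‖ ≤ r₂} → MonotoneOn (sphMax v) (Icc r₁ r₂) →
      sphMax v r₁ < sphMax v r₂ → γ * sphMax v r₂ ≤ sphMax v r₁ →
      ∀ N : ℕ, 0 < N →
      B * ((r₂ - r₁) / (4 * (sphMax v r₂ - sphMax v r₁))) ^ (p - 1 - α) *
        ((r₂ - r₁) / (2 * N)) ≤ L →
      ((r₂ - r₁) / (4 * (sphMax v r₂ - sphMax v r₁))) ^ (p - 1) *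
        ((r₂ - r₁) / (2 * N)) * h ≤ C := by
  obtain ⟨C, hC, hlocal⟩ := IsSubsolOn.exists_local_source_bound (E := Euc n)
    (by rwa [finrank_euclideanSpace_fin]) hp hC₁ hC₂ hα₀ hαp hL (half_pos hγ₀)
  refine ⟨C, hC, fun B h r₁ r₂ v f F hsub hr₁ hr hv hmono hlt hγM N hN hB => ?_⟩
  obtain ⟨x₀, m, hball, hm, hmx₀, hup⟩ :=
    exists_ball_subset_ann_le_add_div (by omega) hr₁ hr hv hmono hN
  set δ := sphMax v r₂ - sphMax v r₁ with hδ_def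
  have hN' : (1 : ℝ) ≤ N := mod_cast hN
  have hδ : 0 < δ := sub_pos.2 hlt
  have hR : 0 < r₂ - r₁ := sub_pos.2 hr
  have hδN : 0 < δ / N := by positivity
  have hδN_le : δ / N ≤ δ := div_le_self hδ.le hN'
  have hquot : (r₂ - r₁) / (2 * N) / (2 * (δ / N)) = (r₂ - r₁) / (4 * δ) := by
    field_simp
    norm_num
  have hκ : 0 ≤ m - γ * (δ / N) := by
    have hM₂ : 0 < sphMax v r₂ := by nlinarith
    have hM₁ : 0 < sphMax v r₁ := (mul_pos hγ₀ hM₂).trans_le hγM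
    have hδ_le : δ / N ≤ sphMax v r₂ := by linarith [hδ_def]
    linarith [mul_le_mul_of_nonneg_left hδ_le hγ₀.le]
  have hbound := hlocal B h (m - γ * (δ / N)) (2 * (δ / N)) ((r₂ - r₁) / (2 * N)) x₀ _ v f F hsub
    (isOpen_ann n r₁ r₂) hball (by positivity) hκ (by positivity)
    (fun x hx => (hup x hx).trans (by nlinarith)) (by linarith)
  rw [hquot] at hbound
  exact hbound hB

lemma exists_nat_mul_le_le_mul_two_mul (hlam : 0 < lam) (hK : lam ≤ K) :
    ∃ N : ℕ, 0 < N ∧ lam * N ≤ K ∧ K ≤ lam * (2 * N) := by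
  have hK' : 1 ≤ K / lam := (one_le_div hlam).2 hK
  have hN : 1 ≤ ⌊K / lam⌋₊ := Nat.le_floor (by simpa using hK')
  refine ⟨⌊K / lam⌋₊, hN, ?_, ?_⟩
  · rw [← le_div_iff₀' hlam]
    exact Nat.floor_le (zero_le_one.trans hK')
  · have hN' : (1 : ℝ) ≤ ⌊K / lam⌋₊ := mod_cast hN
    rw [← div_le_iff₀' hlam]
    linarith [Nat.lt_floor_add_one (K / lam)]

lemma rpow_mul_rpow_eq_div_rpow_mul (hδ : 0 < δ) (hR : 0 < R) :
    δ ^ (α - p + 1) * R ^ (p - α) = (R / δ) ^ (p - 1 - α) * R := by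
  rw [Real.div_rpow hR.le hδ.le, show p - α = (p - 1 - α) + 1 by ring, Real.rpow_add_one hR.ne',
    show α - p + 1 = -(p - 1 - α) by ring, Real.rpow_neg hδ.le]
  ring

lemma div_mul_rpow_mul_div_le (hδ : 0 < δ) (hR : 0 < R) (hN : 0 < N)
    (hK : B * ((R / δ) ^ (p - 1 - α) * R) ≤ lam * (2 * N)) :
    B * (R / (4 * δ)) ^ (p - 1 - α) * (R / (2 * N)) ≤ (1 / 4) ^ (p - 1 - α) * lam := by
  have hscale : (R / (4 * δ)) ^ (p - 1 - α) = (1 / 4) ^ (p - 1 - α) * (R / δ) ^ (p - 1 - α) := by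
    rw [← Real.mul_rpow (by norm_num) (by positivity), div_mul_div_comm, one_mul]
  calc B * (R / (4 * δ)) ^ (p - 1 - α) * (R / (2 * N))
      = (1 / 4) ^ (p - 1 - α) * (B * ((R / δ) ^ (p - 1 - α) * R) / (2 * N)) := by
        rw [hscale]
        ring
    _ ≤ (1 / 4) ^ (p - 1 - α) * lam := by
        gcongr
        rwa [div_le_iff₀ (by positivity)]

/- Multiplying the two hypotheses eliminates `N`; what is left over is a power of `R / δ`. -/
lemma mul_rpow_mul_le_rpow_mul (hδ : 0 < δ) (hR : 0 < R) (hC : 0 < C) (hlam : 0 < lam)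
    (hN : 0 < N) (hK : lam * N ≤ B * ((R / δ) ^ (p - 1 - α) * R))
    (hh : (R / (4 * δ)) ^ (p - 1) * (R / (2 * N)) * h ≤ C) :
    (1 / 4) ^ (p - 1) * lam / (2 * C) * R ^ α * h ≤ δ ^ α * B := by
  have hscale : (R / (4 * δ)) ^ (p - 1) = (1 / 4) ^ (p - 1) * (R / δ) ^ (p - 1) := by
    rw [← Real.mul_rpow (by norm_num) (by positivity), div_mul_div_comm, one_mul]
  have hsplit : (R / δ) ^ (p - 1 - α) * R ^ α = (R / δ) ^ (p - 1) * δ ^ α := by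
    rw [Real.rpow_sub (by positivity), Real.div_rpow hR.le hδ.le α]
    field_simp
  set q : ℝ := (1 / 4) ^ (p - 1)
  set T := (R / δ) ^ (p - 1)
  have hT : 0 < T := by positivity
  have hh' : q * T * R * h ≤ 2 * N * C := by
    rw [hscale] at hh
    calc q * T * R * h = 2 * N * (q * T * (R / (2 * N)) * h) := by field_simp
      _ ≤ 2 * N * C := by gcongr
  have hK' : lam * N * R ^ α ≤ T * R * (δ ^ α * B) := by
    calc lam * N * R ^ α ≤ B * ((R / δ) ^ (p - 1 - α) * R) * R ^ α := by gcongr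
      _ = B * R * ((R / δ) ^ (p - 1 - α) * R ^ α) := by ring
      _ = T * R * (δ ^ α * B) := by rw [hsplit]; ring
  refine le_of_mul_le_mul_left ?_ (by positivity : 0 < T * R)
  calc T * R * (q * lam / (2 * C) * R ^ α * h)
      = lam * R ^ α / (2 * C) * (q * T * R * h) := by ring
    _ ≤ lam * R ^ α / (2 * C) * (2 * N * C) := by gcongr
    _ = lam * N * R ^ α := by field_simp
    _ ≤ T * R * (δ ^ α * B) := hK'

end AnnulusBound

theorem stmt_18_general (n : ℕ) (hn : 2 ≤ n) (p C₁ C₂ α : ℝ) (hp : 1 < p)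
    (hC₁ : 0 < C₁) (hC₂ : 0 < C₂) (hα₀ : 0 ≤ α) (hαp : α ≤ p)
    (γ lam : ℝ) (hγ₀ : 0 < γ) (hγ₁ : γ < 1) (hlam : 0 < lam) :
    ∃ C : ℝ, 0 < C ∧
      ∀ (A : Euc n → Euc n → Euc n), StructCond A p C₁ C₂ →
      ∀ (b : Euc n → ℝ), Measurable b → (∀ x, 0 ≤ b x) → LocBdd b →
      ∀ (r₁ r₂ h : ℝ), 0 ≤ r₁ → r₁ < r₂ →
      ∀ v : Euc n → ℝ,
        ContinuousOn v {x : Euc n | r₁ ≤ ‖x‖ ∧ ‖x‖ ≤ r₂} →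
        ContDiffOn ℝ 1 v (Ann n r₁ r₂) →
        IsWeakSol A b α
          (Set.indicator {x ∈ Ann n r₁ r₂ | 0 < v x} fun _ => h) (Ann n r₁ r₂) v →
        MonotoneOn (sphMax v) (Icc r₁ r₂) →
        sphMax v r₁ < sphMax v r₂ → γ * sphMax v r₂ ≤ sphMax v r₁ →
        lam ≤ (sphMax v r₂ - sphMax v r₁) ^ (α - p + 1) * (r₂ - r₁) ^ (p - α) *
            essSup b (volume.restrict (Ann n r₁ r₂)) →
        C * (r₂ - r₁) ^ α * h ≤
          (sphMax v r₂ - sphMax v r₁) ^ α * essSup b (volume.restrict (Ann n r₁ r₂)) := by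
  obtain ⟨C, hC, hsource⟩ := IsSubsolOn.exists_annulus_source_bound (n := n)
    (L := (1 / 4) ^ (p - 1 - α) * lam) hn hp hC₁ hC₂ hα₀ hαp (by positivity) hγ₀ hγ₁
  refine ⟨(1 / 4) ^ (p - 1) * lam / (2 * C), by positivity, ?_⟩
  intro A hA b hbm hb₀ hb r₁ r₂ h hr₁ hr v hv hv₁ hweak hmono hlt hγM hlarge
  have hδ := sub_pos.2 hlt
  have hR := sub_pos.2 hr
  rw [rpow_mul_rpow_eq_div_rpow_mul hδ hR, mul_comm] at hlarge
  obtain ⟨N, hN, hNlow, hNup⟩ := exists_nat_mul_le_le_mul_two_mul hlam hlarge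
  have hN' : (0 : ℝ) < N := mod_cast hN
  have hsub := hweak.isSubsolOn hA hp.le hα₀ (isOpen_ann n r₁ r₂) hbm hb₀ hb
    (hb.ae_restrict_ann_le_essSup r₁ r₂) hv₁
  exact mul_rpow_mul_le_rpow_mul hδ hR hC hlam hN' hNlow <|
    hsource _ h r₁ r₂ v _ _ hsub hr₁ hr hv hmono hlt hγM N hN
      (div_mul_rpow_mul_div_le hδ hR hN' hNup)

/-- Lemma 4.10: if `M(·;v)` is nondecreasing on `[r₁, r₂]`,
`M(r₂;v) > M(r₁;v) ≥ γ M(r₂;v)` and the `b`-term is large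
(`(M(r₂;v)-M(r₁;v))^{α-p+1}(r₂-r₁)^{p-α} ess sup b ≥ λ`), then
`(M(r₂;v) - M(r₁;v))^α ess sup b ≥ C (r₂ - r₁)^α h`. -/
theorem stmt_18 (n : ℕ) (hn : 2 ≤ n) (p C₁ C₂ α : ℝ) (hp : 1 < p)
    (hC₁ : 0 < C₁) (hC₂ : 0 < C₂) (hα₁ : p - 1 ≤ α) (hα₂ : α ≤ p)
    (γ lam : ℝ) (hγ0 : 0 < γ) (hγ1 : γ < 1) (hlam : 0 < lam) :
    ∃ C : ℝ, 0 < C ∧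
      ∀ (A : Euc n → Euc n → Euc n), StructCond A p C₁ C₂ →
      ∀ (b : Euc n → ℝ), Measurable b → (∀ x, 0 ≤ b x) → LocBdd b →
      ∀ (r₁ r₂ h : ℝ), 0 < r₁ → r₁ < r₂ → 0 ≤ h →
      ∀ v : Euc n → ℝ,
        ContinuousOn v {x : Euc n | r₁ ≤ ‖x‖ ∧ ‖x‖ ≤ r₂} →
        (∀ x, r₁ ≤ ‖x‖ → ‖x‖ ≤ r₂ → 0 ≤ v x) →
        ContDiffOn ℝ 1 v (Ann n r₁ r₂) →
        IsWeakSol A b α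
          (Set.indicator {x ∈ Ann n r₁ r₂ | 0 < v x} fun _ => h) (Ann n r₁ r₂) v →
        (∀ ρ₁ ρ₂ : ℝ, r₁ ≤ ρ₁ → ρ₁ ≤ ρ₂ → ρ₂ ≤ r₂ → sphMax v ρ₁ ≤ sphMax v ρ₂) →
        sphMax v r₁ < sphMax v r₂ → γ * sphMax v r₂ ≤ sphMax v r₁ →
        lam ≤ (sphMax v r₂ - sphMax v r₁) ^ (α - p + 1) * (r₂ - r₁) ^ (p - α) *
            essSup b (volume.restrict (Ann n r₁ r₂)) →
        C * (r₂ - r₁) ^ α * h ≤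
          (sphMax v r₂ - sphMax v r₁) ^ α * essSup b (volume.restrict (Ann n r₁ r₂)) := by
  obtain ⟨C, hC, hbound⟩ := stmt_18_general n hn p C₁ C₂ α hp hC₁ hC₂ (by linarith) hα₂
    γ lam hγ0 hγ1 hlam
  exact ⟨C, hC, fun A hA b hbm hb₀ hb r₁ r₂ h hr₁ hr _ v hv _ hv₁ hweak hmono =>
    hbound A hA b hbm hb₀ hb r₁ r₂ h hr₁.le hr v hv hv₁ hweak
      fun _ h₁ _ h₂ hle => hmono _ _ h₁.1 hle h₂.2⟩
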